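/- arXiv:1205.0829 — 4 statements merged into one kernel-verified Lean document; each statement's English description precedes it below -/
import Mathlib

section
/- Let f be a Lorenz map, C a nice interval for f, and T the transfer map to C with transfer time τ. If I is a connected component of the domain of T, then τ is constant on I, say τ|_I = n; the map f^n restricted to I is monotone and maps I onto C; and the intervals I, f(I), …, f^n(I) are pairwise disjoint. -/
open Set Filter MeasureTheory Topology
open scoped Classical

noncomputable section

/-- The standard Lorenz family `Q(x)` with critical exponent `α`,
critical point `c`, and critical values `u`, `1 - v`. -/
def lorenzQ (α u v c : ℝ) (x : ℝ) : ℝ :=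
  if x < c then u * (1 - ((c - x) / c) ^ α)
  else 1 + v * (-1 + ((x - c) / (1 - c)) ^ α)

/-- A Lorenz map on `[0,1] ∖ {c}` with critical exponent `α`, given by the data
`(u, v, c, φ, ψ)` where `φ, ψ` are orientation-preserving homeomorphisms of `[0,1]`
(smoothness is imposed separately by `LorenzMap.IsCk`). -/
structure LorenzMap (α : ℝ) where
  u : ℝ
  v : ℝ
  c : ℝ
  φ : ℝ → ℝ
  ψ : ℝ → ℝ
  hu : u ∈ Icc (0 : ℝ) 1
  hv : v ∈ Icc (0 : ℝ) 1
  hc : c ∈ Ioo (0 : ℝ) 1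
  hφ0 : φ 0 = 0
  hφ1 : φ 1 = 1
  hψ0 : ψ 0 = 0
  hψ1 : ψ 1 = 1
  hφmono : StrictMonoOn φ (Icc 0 1)
  hψmono : StrictMonoOn ψ (Icc 0 1)
  hφcont : ContinuousOn φ (Icc 0 1)
  hψcont : ContinuousOn ψ (Icc 0 1)

namespace LorenzMap

variable {α : ℝ}

/-- The underlying interval map `f(x) = φ(Q(x))` for `x < c`, `ψ(Q(x))` for `x > c`
(the value at `x = c` itself is a junk convention; `c` is not in the domain). -/
def toFun (f : LorenzMap α) : ℝ → ℝ := fun x =>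
  if x < f.c then f.φ (lorenzQ α f.u f.v f.c x) else f.ψ (lorenzQ α f.u f.v f.c x)

/-- Left critical value `ĉ₁ = lim_{x ↑ c} f(x) = φ(u)`. -/
def cv1 (f : LorenzMap α) : ℝ := f.φ f.u

/-- Right critical value `ĉ₀ = lim_{x ↓ c} f(x) = ψ(1 - v)`. -/
def cv0 (f : LorenzMap α) : ℝ := f.ψ (1 - f.v)

/-- A Lorenz map is nontrivial if `ĉ₀ < c < ĉ₁`. -/
def IsNontrivial (f : LorenzMap α) : Prop := f.cv0 < f.c ∧ f.c < f.cv1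

end LorenzMap

/-- `φ` is an orientation-preserving `C^k` diffeomorphism of `[0,1]` onto itself. -/
def IsOPDiffeo (k : ℕ) (φ : ℝ → ℝ) : Prop :=
  ContDiffOn ℝ k φ (Icc 0 1) ∧ φ 0 = 0 ∧ φ 1 = 1 ∧ StrictMonoOn φ (Icc 0 1) ∧
    ∀ x ∈ Icc (0 : ℝ) 1, 0 < derivWithin φ (Icc 0 1) x

/-- A `C^k` Lorenz map: both diffeomorphic parts are orientation-preserving `C^k`
diffeomorphisms of `[0,1]`. -/
def LorenzMap.IsCk {α : ℝ} (k : ℕ) (f : LorenzMap α) : Prop :=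
  IsOPDiffeo k f.φ ∧ IsOPDiffeo k f.ψ

/-- The Schwarzian derivative `Sf = f'''/f' - (3/2) (f''/f')²`. -/
def schwarzian (f : ℝ → ℝ) (x : ℝ) : ℝ :=
  deriv (deriv (deriv f)) x / deriv f x - (3 / 2) * (deriv (deriv f) x / deriv f x) ^ 2

/-- `f` has negative Schwarzian derivative on `[0,1] ∖ {c}`. -/
def LorenzMap.NegSchwarzian {α : ℝ} (f : LorenzMap α) : Prop :=
  ∀ x ∈ Icc (0 : ℝ) 1 \ {f.c}, schwarzian f.toFun x < 0

/-- Distortion of a diffeomorphism of `[0,1]`: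
`Dist φ = sup_{x,y ∈ [0,1]} log (φ'(x) / φ'(y))`. -/
def distortion (φ : ℝ → ℝ) : ℝ :=
  ⨆ x : Icc (0 : ℝ) 1, ⨆ y : Icc (0 : ℝ) 1,
    Real.log (derivWithin φ (Icc 0 1) x.1 / derivWithin φ (Icc 0 1) y.1)

/-- Membership in the set `K(b̄)`: `f` is a `C¹` Lorenz map with
`α^{-b̄/α} ≤ 1 - c ≤ θ α^{-b̄σ/α²}` and `Dist φ, Dist ψ ≤ δ = (1/b̄)²`. -/
def memK (α σ θ : ℝ) (bbar : ℕ) (f : LorenzMap α) : Prop :=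
  f.IsCk 1 ∧
  α ^ (-(bbar : ℝ) / α) ≤ 1 - f.c ∧
  1 - f.c ≤ θ * α ^ (-(bbar : ℝ) * σ / α ^ 2) ∧
  distortion f.φ ≤ (1 / (bbar : ℝ)) ^ 2 ∧ distortion f.ψ ≤ (1 / (bbar : ℝ)) ^ 2

/-- The monotone type with `a` ones and `b` zeros (encoded as the pair `(a, b)`)
belongs to `Ω(b̄)`: `α + σ ≤ a + 1 ≤ 2α - σ` and `b̄ ≤ b ≤ (1 + (σ/α)² - β) b̄`. -/
def memOmega (α σ β : ℝ) (bbar : ℕ) (ab : ℕ × ℕ) : Prop :=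
  1 ≤ ab.1 ∧ 1 ≤ ab.2 ∧
  α + σ ≤ (ab.1 : ℝ) + 1 ∧ (ab.1 : ℝ) + 1 ≤ 2 * α - σ ∧
  (bbar : ℝ) ≤ (ab.2 : ℝ) ∧ (ab.2 : ℝ) ≤ (1 + (σ / α) ^ 2 - β) * (bbar : ℝ)

/-- `(p,q)` is a return interval around `c` on which the first-return map of `f`
is `f^{a+1}` on `L = (p,c)` and `f^{b+1}` on `R = (c,q)`, with monotone combinatorics:
`f^i(L) ⊂ (c,1)` for `1 ≤ i ≤ a` and `f^j(R) ⊂ (0,c)` for `1 ≤ j ≤ b`,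
all intermediate iterates staying outside `(p,q)`. -/
def ReturnCond {α : ℝ} (f : LorenzMap α) (a b : ℕ) (p q : ℝ) : Prop :=
  1 ≤ a ∧ 1 ≤ b ∧ 0 ≤ p ∧ p < f.c ∧ f.c < q ∧ q ≤ 1 ∧ (0 < p ∨ q < 1) ∧
  (∀ x ∈ Ioo p f.c,
    (∀ i : ℕ, 1 ≤ i → i ≤ a → f.toFun^[i] x ∈ Ioo f.c 1 ∧ f.toFun^[i] x ∉ Ioo p q) ∧
    f.toFun^[a + 1] x ∈ Ioo p q) ∧
  (∀ x ∈ Ioo f.c q,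
    (∀ j : ℕ, 1 ≤ j → j ≤ b → f.toFun^[j] x ∈ Ioo 0 f.c ∧ f.toFun^[j] x ∉ Ioo p q) ∧
    f.toFun^[b + 1] x ∈ Ioo p q)

/-- A return interval which is maximal among all return intervals containing it. -/
def IsMaxReturnInterval {α : ℝ} (f : LorenzMap α) (a b : ℕ) (p q : ℝ) : Prop :=
  ReturnCond f a b p q ∧
  ∀ a' b' : ℕ, ∀ p' q' : ℝ, ReturnCond f a' b' p' q' → Ioo p q ⊆ Ioo p' q' →
    p = p' ∧ q = q'

/-- `g` is the renormalization of `f`, of monotone type with `a` ones and `b` zeros: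
`g` is the nontrivial Lorenz map obtained by affinely rescaling the first-return map
of `f` to the maximal return interval `(p,q)`. -/
def RenormOf {α : ℝ} (f : LorenzMap α) (a b : ℕ) (g : LorenzMap α) : Prop :=
  ∃ p q : ℝ, IsMaxReturnInterval f a b p q ∧
    g.c = (f.c - p) / (q - p) ∧ g.IsNontrivial ∧
    (∀ x ∈ Ioo p f.c, g.toFun ((x - p) / (q - p)) = (f.toFun^[a + 1] x - p) / (q - p)) ∧
    (∀ x ∈ Ioo f.c q, g.toFun ((x - p) / (q - p)) = (f.toFun^[b + 1] x - p) / (q - p))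

/-- `f` is renormalizable of monotone type `(01⋯1, 10⋯0)` with `a` ones and `b` zeros. -/
def MonRenormalizable {α : ℝ} (f : LorenzMap α) (a b : ℕ) : Prop :=
  ∃ g : LorenzMap α, RenormOf f a b g

/-- The renormalization operator (defined via choice on renormalizable maps
of monotone type; the identity on non-renormalizable maps). -/
def renormOp (α : ℝ) (f : LorenzMap α) : LorenzMap α :=
  if h : ∃ g : LorenzMap α, ∃ a b : ℕ, RenormOf f a b g then h.choose else f

/-- `f` is infinitely renormalizable with (monotone) combinatorial type
`ω = (ω₀, ω₁, …)`, each `ω n` encoded as the pair (number of ones, number of zeros). -/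
def InfRenormType (α : ℝ) (f : LorenzMap α) (ω : ℕ → ℕ × ℕ) : Prop :=
  ∀ n : ℕ, MonRenormalizable ((renormOp α)^[n] f) (ω n).1 (ω n).2

/-- `(p,q)` is a nice interval for `f`: an open subinterval of `[0,1]` containing the
critical point whose boundary orbits are disjoint from it. -/
def IsNiceInterval {α : ℝ} (f : LorenzMap α) (p q : ℝ) : Prop :=
  0 ≤ p ∧ p < f.c ∧ f.c < q ∧ q ≤ 1 ∧
  (∀ n : ℕ, f.toFun^[n] p ∉ Ioo p q) ∧ (∀ n : ℕ, f.toFun^[n] q ∉ Ioo p q)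

/-- The domain `⋃_{n ≥ 0} f^{-n}(C)` of the transfer map to `C`:
points of `[0,1]` some iterate of which lies in `C`, the critical point not being hit
before entering `C`. -/
def transferDomain {α : ℝ} (f : LorenzMap α) (C : Set ℝ) : Set ℝ :=
  {x ∈ Icc (0 : ℝ) 1 | ∃ n : ℕ, f.toFun^[n] x ∈ C ∧ ∀ j < n, f.toFun^[j] x ≠ f.c}

/-- The transfer time to `C`: the least `n ≥ 0` with `f^n(x) ∈ C`. -/
def transferTime {α : ℝ} (f : LorenzMap α) (C : Set ℝ) (x : ℝ) : ℕ :=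
  sInf {n : ℕ | f.toFun^[n] x ∈ C ∧ ∀ j < n, f.toFun^[j] x ≠ f.c}

/-- `(p,q)` contains a `δ`-scaled neighborhood of `(p',q')`: both components of the
difference have length greater than `δ (q' - p')`. -/
def ScaledInside (δ p q p' q' : ℝ) : Prop :=
  p < p' ∧ q' < q ∧ δ * (q' - p') < p' - p ∧ δ * (q' - p') < q - q'

/-- The weak Markov property: a nested sequence of nice intervals, each containing a
`δ`-scaled neighborhood of the next, with almost everywhere defined transfer maps. -/
def LorenzMap.WeakMarkov {α : ℝ} (f : LorenzMap α) : Prop :=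
  ∃ δ : ℝ, 0 < δ ∧ ∃ p q : ℕ → ℝ,
    (∀ n, IsNiceInterval f (p n) (q n)) ∧
    (∀ n, ScaledInside δ (p n) (q n) (p (n + 1)) (q (n + 1))) ∧
    (∀ n, volume (Icc (0 : ℝ) 1 \ transferDomain f (Ioo (p n) (q n))) = 0)

/-- `f` has a periodic attractor: a periodic orbit attracting an open set of points. -/
def LorenzMap.HasPeriodicAttractor {α : ℝ} (f : LorenzMap α) : Prop :=
  ∃ p ∈ Icc (0 : ℝ) 1, ∃ m : ℕ, 1 ≤ m ∧ f.toFun^[m] p = p ∧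
    ∃ U : Set ℝ, IsOpen U ∧ (U ∩ Icc (0 : ℝ) 1).Nonempty ∧
      ∀ x ∈ U ∩ Icc (0 : ℝ) 1, Tendsto (fun n => f.toFun^[n * m] x) atTop (𝓝 p)

/-- `W` is a wandering interval of `f`: a nondegenerate interval in `[0,1]` on which all
iterates are defined (no iterate meets the critical point), whose iterates are pairwise
disjoint, and whose forward orbit does not converge to a periodic orbit. -/
def LorenzMap.IsWanderingInterval {α : ℝ} (f : LorenzMap α) (W : Set ℝ) : Prop :=
  W ⊆ Icc 0 1 ∧ W.OrdConnected ∧ (∃ x ∈ W, ∃ y ∈ W, x < y) ∧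
  (∀ n : ℕ, f.c ∉ f.toFun^[n] '' W) ∧
  (∀ m n : ℕ, m ≠ n → Disjoint (f.toFun^[m] '' W) (f.toFun^[n] '' W)) ∧
  ¬ ∃ p ∈ Icc (0 : ℝ) 1, ∃ m : ℕ, 1 ≤ m ∧ f.toFun^[m] p = p ∧
      ∀ x ∈ W, Tendsto
        (fun n => Metric.infDist (f.toFun^[n] x) {y : ℝ | ∃ i < m, f.toFun^[i] p = y})
        atTop (𝓝 0)


theorem LorenzMap.left_facts {α : ℝ} (hα : 1 < α) (f : LorenzMap α) :
    ContinuousOn f.toFun (Ico 0 f.c) ∧ f.toFun 0 = 0 ∧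
    (∀ x ∈ Ico 0 f.c, f.toFun x ∈ Icc (0:ℝ) 1) ∧
    (StrictMonoOn f.toFun (Ico 0 f.c) ∨ ∀ x ∈ Ico 0 f.c, f.toFun x = 0) := by
  obtain ⟨hc0, hc1⟩ := f.hc
  obtain ⟨hu0, hu1⟩ := f.hu
  have e : EqOn f.toFun (fun x => f.φ (f.u * (1 - ((f.c - x) / f.c) ^ α))) (Ico 0 f.c) := by
    intro x hx
    simp [LorenzMap.toFun, lorenzQ, hx.2]
  have hr : ∀ x ∈ Ico 0 f.c, ((f.c - x) / f.c) ^ α ∈ Icc (0:ℝ) 1 := by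
    intro x hx
    have h0 : 0 ≤ (f.c - x) / f.c := div_nonneg (by linarith [hx.2]) hc0.le
    have h1 : (f.c - x) / f.c ≤ 1 := (div_le_one hc0).2 (by linarith [hx.1])
    exact ⟨Real.rpow_nonneg h0 _, Real.rpow_le_one h0 h1 (by linarith)⟩
  have hQ : ∀ x ∈ Ico 0 f.c, f.u * (1 - ((f.c - x) / f.c) ^ α) ∈ Icc (0:ℝ) 1 := by
    intro x hx
    obtain ⟨h0, h1⟩ := hr x hx
    constructor
    · exact mul_nonneg hu0 (by linarith)
    · nlinarith
  have hF : ∀ x ∈ Icc (0:ℝ) 1, f.φ x ∈ Icc (0:ℝ) 1 := by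
    intro x hx
    have h1 := f.hφmono.monotoneOn (left_mem_Icc.2 zero_le_one) hx hx.1
    have h2 := f.hφmono.monotoneOn hx (right_mem_Icc.2 zero_le_one) hx.2
    rw [f.hφ0] at h1
    rw [f.hφ1] at h2
    exact ⟨h1, h2⟩
  refine ⟨?_, ?_, ?_, ?_⟩
  · refine ContinuousOn.congr ?_ e
    refine f.hφcont.comp ?_ hQ
    refine Continuous.continuousOn ?_
    have : Continuous fun x : ℝ => ((f.c - x) / f.c) ^ α :=
      Continuous.rpow_const (by fun_prop) (fun x => Or.inr (by linarith))
    fun_prop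
  · rw [e ⟨le_refl 0, hc0⟩]
    simp [hc0.ne', f.hφ0]
  · intro x hx
    rw [e hx]
    exact hF _ (hQ x hx)
  · rcases hu0.eq_or_lt with h | h
    · right
      intro x hx
      rw [e hx]
      simp [← h, f.hφ0]
    · left
      refine StrictMonoOn.congr ?_ e.symm
      intro x hx y hy hxy
      refine f.hφmono (hQ x hx) (hQ y hy) ?_
      have : ((f.c - y) / f.c) ^ α < ((f.c - x) / f.c) ^ α := by
        apply Real.rpow_lt_rpow
        · exact div_nonneg (by linarith [hy.2]) hc0.le
        · exact div_lt_div_of_pos_right (by linarith) hc0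
        · linarith
      exact mul_lt_mul_of_pos_left (by linarith) h

theorem LorenzMap.right_facts {α : ℝ} (hα : 1 < α) (f : LorenzMap α) :
    ContinuousOn f.toFun (Ioc f.c 1) ∧ f.toFun 1 = 1 ∧
    (∀ x ∈ Ioc f.c 1, f.toFun x ∈ Icc (0:ℝ) 1) ∧
    (StrictMonoOn f.toFun (Ioc f.c 1) ∨ ∀ x ∈ Ioc f.c 1, f.toFun x = 1) := by
  obtain ⟨hc0, hc1⟩ := f.hc
  obtain ⟨hu0, hu1⟩ := f.hv
  have hd : 0 < 1 - f.c := by linarith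
  have e : EqOn f.toFun (fun x => f.ψ (1 + f.v * (-1 + ((x - f.c) / (1 - f.c)) ^ α)))
      (Ioc f.c 1) := by
    intro x hx
    simp [LorenzMap.toFun, lorenzQ, not_lt.2 hx.1.le]
  have hr : ∀ x ∈ Ioc f.c 1, ((x - f.c) / (1 - f.c)) ^ α ∈ Icc (0:ℝ) 1 := by
    intro x hx
    have h0 : 0 ≤ (x - f.c) / (1 - f.c) := div_nonneg (by linarith [hx.1]) hd.le
    have h1 : (x - f.c) / (1 - f.c) ≤ 1 := (div_le_one hd).2 (by linarith [hx.2])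
    exact ⟨Real.rpow_nonneg h0 _, Real.rpow_le_one h0 h1 (by linarith)⟩
  have hQ : ∀ x ∈ Ioc f.c 1, 1 + f.v * (-1 + ((x - f.c) / (1 - f.c)) ^ α) ∈ Icc (0:ℝ) 1 := by
    intro x hx
    obtain ⟨h0, h1⟩ := hr x hx
    constructor
    · nlinarith
    · nlinarith
  have hF : ∀ x ∈ Icc (0:ℝ) 1, f.ψ x ∈ Icc (0:ℝ) 1 := by
    intro x hx
    have h1 := f.hψmono.monotoneOn (left_mem_Icc.2 zero_le_one) hx hx.1
    have h2 := f.hψmono.monotoneOn hx (right_mem_Icc.2 zero_le_one) hx.2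
    rw [f.hψ0] at h1
    rw [f.hψ1] at h2
    exact ⟨h1, h2⟩
  refine ⟨?_, ?_, ?_, ?_⟩
  · refine ContinuousOn.congr ?_ e
    refine f.hψcont.comp ?_ hQ
    refine Continuous.continuousOn ?_
    have : Continuous fun x : ℝ => ((x - f.c) / (1 - f.c)) ^ α :=
      Continuous.rpow_const (by fun_prop) (fun x => Or.inr (by linarith))
    fun_prop
  · rw [e ⟨hc1, le_refl 1⟩]
    simp [hd.ne', f.hψ1]
  · intro x hx
    rw [e hx]
    exact hF _ (hQ x hx)
  · rcases hu0.eq_or_lt with h | h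
    · right
      intro x hx
      rw [e hx]
      simp [← h, f.hψ1]
    · left
      refine StrictMonoOn.congr ?_ e.symm
      intro x hx y hy hxy
      refine f.hψmono (hQ x hx) (hQ y hy) ?_
      have : ((x - f.c) / (1 - f.c)) ^ α < ((y - f.c) / (1 - f.c)) ^ α := by
        apply Real.rpow_lt_rpow
        · exact div_nonneg (by linarith [hx.1]) hd.le
        · exact div_lt_div_of_pos_right (by linarith) hd
        · linarith
      have := mul_lt_mul_of_pos_left this h
      linarith

theorem LorenzMap.branch {α : ℝ} (hα : 1 < α) (f : LorenzMap α) (p q : ℝ)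
    (hnice : IsNiceInterval f p q) (n : ℕ) :
    ∀ x ∈ Icc (0:ℝ) 1, f.toFun^[n] x ∈ Ioo p q → (∀ j < n, f.toFun^[j] x ∉ Ioo p q) →
    ∃ a b : ℝ, 0 ≤ a ∧ b ≤ 1 ∧ x ∈ Ioo a b ∧ ContinuousOn (f.toFun^[n]) (Icc a b) ∧
      StrictMonoOn (f.toFun^[n]) (Icc a b) ∧ f.toFun^[n] a = p ∧ f.toFun^[n] b = q ∧
      ∀ j < n, ∀ y ∈ Icc a b, f.toFun^[j] y ∉ Ioo p q := by
  obtain ⟨hp0, hpc, hcq, hq1, hp, hq⟩ := hnice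
  obtain ⟨Lc, L0, Lm, Ls⟩ := f.left_facts hα
  obtain ⟨Rc, R1, Rm, Rs⟩ := f.right_facts hα
  induction n with
  | zero =>
    intro x hx hxC _
    exact ⟨p, q, hp0, hq1, hxC, continuousOn_id, strictMonoOn_id, rfl, rfl, by simp⟩
  | succ n ih =>
    intro x hx hxC hxj
    have hx0 : x ∉ Ioo p q := hxj 0 (Nat.succ_pos n)
    have hc' : x ≤ p ∨ q ≤ x := by
      by_contra! h
      exact hx0 h
    have hf01 : f.toFun x ∈ Icc (0:ℝ) 1 := by
      rcases hc' with h | h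
      · exact Lm x ⟨hx.1, by linarith⟩
      · exact Rm x ⟨by linarith, hx.2⟩
    obtain ⟨a', b', ha', hb', hxab, hcont, hmono, hfa, hfb, hj⟩ := ih (f.toFun x) hf01 hxC
      (fun j hjn => hxj (j+1) (by omega))
    have hab : a' < b' := hxab.1.trans hxab.2
    have himg : ∀ y ∈ Ioo a' b', f.toFun^[n] y ∈ Ioo p q := by
      intro y hy
      rw [← hfa, ← hfb]
      exact ⟨hmono (left_mem_Icc.2 hab.le) (Ioo_subset_Icc_self hy) hy.1,
        hmono (Ioo_subset_Icc_self hy) (right_mem_Icc.2 hab.le) hy.2⟩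
    -- it suffices to pull back
    suffices H : ∃ a b : ℝ, 0 ≤ a ∧ b ≤ 1 ∧ x ∈ Ioo a b ∧ ContinuousOn f.toFun (Icc a b) ∧
        StrictMonoOn f.toFun (Icc a b) ∧ f.toFun a = a' ∧ f.toFun b = b' ∧
        ∀ y ∈ Icc a b, y ∉ Ioo p q by
      obtain ⟨a, b, ha, hb, hx', hc1, hm1, e1, e2, hd⟩ := H
      have hab1 : a < b := hx'.1.trans hx'.2
      have hmaps : MapsTo f.toFun (Icc a b) (Icc a' b') := by
        intro y hy
        rw [← e1, ← e2]
        exact ⟨hm1.monotoneOn (left_mem_Icc.2 hab1.le) hy hy.1,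
          hm1.monotoneOn hy (right_mem_Icc.2 hab1.le) hy.2⟩
      refine ⟨a, b, ha, hb, hx', ?_, ?_, ?_, ?_, ?_⟩
      · rw [Function.iterate_succ]
        exact hcont.comp hc1 hmaps
      · rw [Function.iterate_succ]
        exact hmono.comp hm1 hmaps
      · rw [Function.iterate_succ_apply, e1, hfa]
      · rw [Function.iterate_succ_apply, e2, hfb]
      · intro j hjn y hy
        cases j with
        | zero => exact hd y hy
        | succ j =>
          rw [Function.iterate_succ_apply]
          exact hj j (by omega) _ (hmaps hy)
    rcases hc' with h | h
    · have hsub : Icc 0 p ⊆ Ico 0 f.c := fun y hy => ⟨hy.1, by linarith [hy.2]⟩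
      have hs : StrictMonoOn f.toFun (Icc 0 p) := by
        rcases Ls with Ls | Ls
        · exact Ls.mono hsub
        · have := Ls x (hsub ⟨hx.1, h⟩)
          linarith [hxab.1]
      have hcn := Lc.mono hsub
      have hxm : x ∈ Icc 0 p := ⟨hx.1, h⟩
      have hpm : p ∈ Icc 0 p := ⟨hp0, le_refl p⟩
      have hfp : b' ≤ f.toFun p := by
        by_contra! hlt
        have := hs.monotoneOn hxm hpm h
        exact hp (n+1) (himg _ ⟨by linarith [hxab.1], hlt⟩)
      have ivt := intermediate_value_Icc hp0 hcn
      rw [L0] at ivt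
      obtain ⟨a, ham, hae⟩ := ivt ⟨ha', by linarith⟩
      obtain ⟨b, hbm, hbe⟩ := ivt ⟨by linarith, hfp⟩
      have hIsub : Icc a b ⊆ Icc 0 p := Icc_subset_Icc ham.1 hbm.2
      refine ⟨a, b, ham.1, by linarith [hbm.2], ⟨?_, ?_⟩, hcn.mono hIsub, hs.mono hIsub,
        hae, hbe, ?_⟩
      · exact (hs.lt_iff_lt ham hxm).1 (by rw [hae]; exact hxab.1)
      · exact (hs.lt_iff_lt hxm hbm).1 (by rw [hbe]; exact hxab.2)
      · intro y hy hy'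
        linarith [(hIsub hy).2, hy'.1]
    · have hsub : Icc q 1 ⊆ Ioc f.c 1 := fun y hy => ⟨by linarith [hy.1], hy.2⟩
      have hs : StrictMonoOn f.toFun (Icc q 1) := by
        rcases Rs with Rs | Rs
        · exact Rs.mono hsub
        · have := Rs x (hsub ⟨h, hx.2⟩)
          linarith [hxab.2]
      have hcn := Rc.mono hsub
      have hxm : x ∈ Icc q 1 := ⟨h, hx.2⟩
      have hpm : q ∈ Icc q 1 := ⟨le_refl q, hq1⟩
      have hfp : f.toFun q ≤ a' := by
        by_contra! hlt
        have := hs.monotoneOn hpm hxm h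
        exact hq (n+1) (himg _ ⟨hlt, by linarith [hxab.2]⟩)
      have ivt := intermediate_value_Icc hq1 hcn
      rw [R1] at ivt
      obtain ⟨a, ham, hae⟩ := ivt ⟨hfp, by linarith⟩
      obtain ⟨b, hbm, hbe⟩ := ivt ⟨by linarith, hb'⟩
      have hIsub : Icc a b ⊆ Icc q 1 := Icc_subset_Icc ham.1 hbm.2
      refine ⟨a, b, by linarith [ham.1], hbm.2, ⟨?_, ?_⟩, hcn.mono hIsub, hs.mono hIsub,
        hae, hbe, ?_⟩
      · exact (hs.lt_iff_lt ham hxm).1 (by rw [hae]; exact hxab.1)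
      · exact (hs.lt_iff_lt hxm hbm).1 (by rw [hbe]; exact hxab.2)
      · intro y hy hy'
        linarith [(hIsub hy).1, hy'.2]

/-- Branches of the transfer map to a nice interval: on each connected
component `I` of the domain of the transfer map the transfer time `τ` is constant,
`f^τ` maps `I` monotonically onto `C`, and `I, f(I), …, f^τ(I)` are pairwise disjoint. -/
theorem transfer_map_branches (α : ℝ) (hα : 1 < α) (f : LorenzMap α)
    (p q : ℝ) (hnice : IsNiceInterval f p q)
    (I : Set ℝ) (x₀ : ℝ) (hx₀ : x₀ ∈ transferDomain f (Ioo p q))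
    (hI : I = connectedComponentIn (transferDomain f (Ioo p q)) x₀) :
    (∀ x ∈ I, transferTime f (Ioo p q) x = transferTime f (Ioo p q) x₀) ∧
    StrictMonoOn (f.toFun^[transferTime f (Ioo p q) x₀]) I ∧
    f.toFun^[transferTime f (Ioo p q) x₀] '' I = Ioo p q ∧
    (∀ i j : ℕ, i < j → j ≤ transferTime f (Ioo p q) x₀ →
      Disjoint (f.toFun^[i] '' I) (f.toFun^[j] '' I)) := by
  have hcC : f.c ∈ Ioo p q := ⟨hnice.2.1, hnice.2.2.1⟩
  have hne : {n : ℕ | f.toFun^[n] x₀ ∈ Ioo p q ∧ ∀ j < n, f.toFun^[j] x₀ ≠ f.c}.Nonempty := hx₀.2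
  have hmem := Nat.sInf_mem hne
  have hmin : ∀ j < transferTime f (Ioo p q) x₀, f.toFun^[j] x₀ ∉ Ioo p q := by
    intro j hj hjC
    exact Nat.notMem_of_lt_sInf hj ⟨hjC, fun i hi => hmem.2 i (hi.trans hj)⟩
  change f.toFun^[transferTime f (Ioo p q) x₀] x₀ ∈ Ioo p q ∧ _ at hmem
  generalize transferTime f (Ioo p q) x₀ = n at *
  obtain ⟨a, b, ha, hb, hxab, hcont, hmono, hfa, hfb, hj⟩ :=
    f.branch hα p q hnice n x₀ hx₀.1 hmem.1 hmin
  have hab : a < b := hxab.1.trans hxab.2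
  have himg : ∀ y ∈ Ioo a b, f.toFun^[n] y ∈ Ioo p q := by
    intro y hy
    rw [← hfa, ← hfb]
    exact ⟨hmono (left_mem_Icc.2 hab.le) (Ioo_subset_Icc_self hy) hy.1,
      hmono (Ioo_subset_Icc_self hy) (right_mem_Icc.2 hab.le) hy.2⟩
  have hdom : ∀ y ∈ Ioo a b, f.toFun^[n] y ∈ Ioo p q ∧ ∀ j < n, f.toFun^[j] y ≠ f.c := by
    intro y hy
    refine ⟨himg y hy, fun j hjn he => hj j hjn y (Ioo_subset_Icc_self hy) ?_⟩
    rw [he]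
    exact hcC
  have hend : ∀ z ∈ Icc a b, (∀ k, f.toFun^[k] (f.toFun^[n] z) ∉ Ioo p q) →
      z ∉ transferDomain f (Ioo p q) := by
    rintro z hz hk ⟨-, m, hm, -⟩
    rcases lt_or_ge m n with h | h
    · exact hj m h z hz hm
    · obtain ⟨k, rfl⟩ := Nat.exists_eq_add_of_le' h
      rw [Function.iterate_add_apply] at hm
      exact hk k hm
  have hae := hend a (left_mem_Icc.2 hab.le) (by rw [hfa]; exact hnice.2.2.2.2.1)
  have hbe := hend b (right_mem_Icc.2 hab.le) (by rw [hfb]; exact hnice.2.2.2.2.2)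
  have hIab : I = Ioo a b := by
    rw [hI]
    apply Subset.antisymm
    · intro z hz
      have hoc : OrdConnected (connectedComponentIn (transferDomain f (Ioo p q)) x₀) :=
        isPreconnected_connectedComponentIn.ordConnected
      have hxm := mem_connectedComponentIn hx₀
      have hsub := connectedComponentIn_subset (transferDomain f (Ioo p q)) x₀
      constructor
      · by_contra! h
        exact hae (hsub (hoc.out hz hxm ⟨h, hxab.1.le⟩))
      · by_contra! h
        exact hbe (hsub (hoc.out hxm hz ⟨hxab.2.le, h⟩))
    · refine isPreconnected_Ioo.subset_connectedComponentIn hxab ?_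
      intro y hy
      exact ⟨⟨ha.trans hy.1.le, hy.2.le.trans hb⟩, n, hdom y hy⟩
  rw [hIab]
  refine ⟨?_, hmono.mono Ioo_subset_Icc_self, ?_, ?_⟩
  · intro x hx
    apply le_antisymm
    · exact Nat.sInf_le (hdom x hx)
    · refine le_csInf ⟨n, hdom x hx⟩ ?_
      intro m hm
      by_contra! h
      exact hj m h x (Ioo_subset_Icc_self hx) hm.1
  · apply Subset.antisymm
    · rintro _ ⟨y, hy, rfl⟩
      exact himg y hy
    · have := intermediate_value_Ioo hab.le hcont
      rwa [hfa, hfb] at this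
  · intro i j hij hjn
    rw [Set.disjoint_left]
    rintro _ ⟨x, hx, rfl⟩ ⟨y, hy, hxy⟩
    refine hj (n - j + i) (by omega) x (Ioo_subset_Icc_self hx) ?_
    rw [Function.iterate_add_apply, ← hxy, ← Function.iterate_add_apply]
    rw [Nat.sub_add_cancel hjn]
    exact himg y hy

end
end

section
/- Let φ₀, …, φ_{n−1} ∈ D²([0,1]), let φ = φ_{n−1} ∘ ⋯ ∘ φ₀, and let S = Σ_{j} ‖φ_j‖. Then for all x ∈ [0,1]: e^{−S} ≤ φ'(x) ≤ e^{S}, |φ''(x)| ≤ S·e^{2S}, and ‖φ‖ ≤ S·e^{S}. If moreover each φ_j ∈ D³([0,1]), then ‖φ‖₁ ≤ (1 + S)·e^{2S}·Σ_j ‖φ_j‖₁. -/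
open Set Filter Topology

noncomputable section

/-- Derivative within `[0,1]`. -/
def derivI (φ : ℝ → ℝ) : ℝ → ℝ := derivWithin φ (Icc 0 1)

/-- The nonlinearity `Nφ = (log φ')' = φ''/φ'` (with derivatives taken within `[0,1]`). -/
def nonlin (φ : ℝ → ℝ) : ℝ → ℝ := fun x => derivI (derivI φ) x / derivI φ x

/-- The `C⁰`-nonlinearity norm `‖φ‖ = sup_{x ∈ [0,1]} |Nφ(x)|`. -/
def nlNorm (φ : ℝ → ℝ) : ℝ := ⨆ x : Icc (0 : ℝ) 1, |nonlin φ x.1|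

/-- The `C¹`-nonlinearity norm `‖φ‖₁ = max (sup |Nφ|, sup |(Nφ)'|)`. -/
def nlNorm1 (φ : ℝ → ℝ) : ℝ :=
  max (nlNorm φ) (⨆ x : Icc (0 : ℝ) 1, |derivI (nonlin φ) x.1|)

/-- `φ ∈ D^k([0,1])`: an orientation-preserving `C^k` diffeomorphism of `[0,1]`
onto itself. -/
def IsDk (k : ℕ) (φ : ℝ → ℝ) : Prop :=
  ContDiffOn ℝ k φ (Icc 0 1) ∧ φ 0 = 0 ∧ φ 1 = 1 ∧ StrictMonoOn φ (Icc 0 1) ∧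
    MapsTo φ (Icc 0 1) (Icc 0 1) ∧ ∀ x ∈ Icc (0 : ℝ) 1, 0 < derivI φ x

/-- `compFrom φs j m = φ_{j+m-1} ∘ ⋯ ∘ φ_{j+1} ∘ φ_j` (and the identity for `m = 0`). -/
def compFrom (φs : ℕ → ℝ → ℝ) (j : ℕ) : ℕ → ℝ → ℝ
  | 0 => id
  | (m + 1) => φs (j + m) ∘ compFrom φs j m


lemma uI : UniqueDiffOn ℝ (Icc (0:ℝ) 1) := uniqueDiffOn_Icc zero_lt_one

lemma derivI_hasDeriv {f : ℝ → ℝ} {k : ℕ} (hk : 1 ≤ k) (hf : ContDiffOn ℝ k f (Icc 0 1))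
    {x : ℝ} (hx : x ∈ Icc (0:ℝ) 1) : HasDerivWithinAt f (derivI f x) (Icc 0 1) x :=
  ((hf.differentiableOn (by exact_mod_cast (by omega : k ≠ 0))) x hx).hasDerivWithinAt

lemma derivI_contDiff {f : ℝ → ℝ} {k : ℕ} (hf : ContDiffOn ℝ (k+1 : ℕ) f (Icc 0 1)) :
    ContDiffOn ℝ k (derivI f) (Icc 0 1) :=
  hf.derivWithin uI (by norm_cast)

lemma derivI_eq {f : ℝ → ℝ} {x d : ℝ} (hx : x ∈ Icc (0:ℝ) 1)
    (h : HasDerivWithinAt f d (Icc 0 1) x) : derivI f x = d :=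
  h.derivWithin (uI x hx)

lemma nonlin_contDiff {f : ℝ → ℝ} {k : ℕ} (hf : IsDk (k+2) f) :
    ContDiffOn ℝ k (nonlin f) (Icc 0 1) := by
  have h1 : ContDiffOn ℝ (k+1 : ℕ) (derivI f) (Icc 0 1) := derivI_contDiff hf.1
  have h2 : ContDiffOn ℝ k (derivI (derivI f)) (Icc 0 1) := derivI_contDiff h1
  exact h2.div (h1.of_le (by norm_cast; omega)) (fun x hx => (hf.2.2.2.2.2 x hx).ne')

lemma IsDk.le {f : ℝ → ℝ} {k l : ℕ} (h : IsDk l f) (hk : k ≤ l) : IsDk k f :=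
  ⟨h.1.of_le (by exact_mod_cast hk), h.2⟩

lemma le_sup_abs {g : ℝ → ℝ} (hg : ContinuousOn g (Icc 0 1)) {x : ℝ} (hx : x ∈ Icc (0:ℝ) 1) :
    |g x| ≤ ⨆ x : Icc (0 : ℝ) 1, |g x.1| := by
  have hb : BddAbove (range fun x : Icc (0:ℝ) 1 => |g x.1|) := by
    have := isCompact_Icc.bddAbove_image hg.abs
    rwa [image_eq_range] at this
  exact le_ciSup hb ⟨x, hx⟩

lemma nlNorm_nonneg (f : ℝ → ℝ) : 0 ≤ nlNorm f := Real.iSup_nonneg fun _ => abs_nonneg _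

lemma abs_nonlin_le {f : ℝ → ℝ} (hf : IsDk 2 f) {x : ℝ} (hx : x ∈ Icc (0:ℝ) 1) :
    |nonlin f x| ≤ nlNorm f :=
  le_sup_abs (nonlin_contDiff (k := 0) hf).continuousOn hx

lemma abs_dnonlin_le {f : ℝ → ℝ} (hf : IsDk 3 f) {x : ℝ} (hx : x ∈ Icc (0:ℝ) 1) :
    |derivI (nonlin f) x| ≤ nlNorm1 f :=
  (le_sup_abs (derivI_contDiff (k := 0) (nonlin_contDiff (k := 1) hf)).continuousOn hx).trans
    (le_max_right _ _)

lemma comp_deriv {f g : ℝ → ℝ} {k : ℕ} (hk : 1 ≤ k) (hf : IsDk k f) (hg : IsDk k g) {x : ℝ}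
    (hx : x ∈ Icc (0:ℝ) 1) : derivI (g ∘ f) x = derivI g (f x) * derivI f x :=
  derivI_eq hx ((derivI_hasDeriv hk hg.1 (hf.2.2.2.2.1 hx)).comp x (derivI_hasDeriv hk hf.1 hx)
    hf.2.2.2.2.1)

lemma IsDk.comp {f g : ℝ → ℝ} {k : ℕ} (hk : 1 ≤ k) (hf : IsDk k f) (hg : IsDk k g) :
    IsDk k (g ∘ f) := by
  refine ⟨hg.1.comp hf.1 hf.2.2.2.2.1, by simp [hf.2.1, hg.2.1], by simp [hf.2.2.1, hg.2.2.1],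
    hg.2.2.2.1.comp hf.2.2.2.1 hf.2.2.2.2.1, hg.2.2.2.2.1.comp hf.2.2.2.2.1, fun x hx => ?_⟩
  rw [comp_deriv hk hf hg hx]
  exact mul_pos (hg.2.2.2.2.2 _ (hf.2.2.2.2.1 hx)) (hf.2.2.2.2.2 _ hx)

lemma comp_nonlin {f g : ℝ → ℝ} (hf : IsDk 2 f) (hg : IsDk 2 g) {x : ℝ}
    (hx : x ∈ Icc (0:ℝ) 1) :
    nonlin (g ∘ f) x = nonlin g (f x) * derivI f x + nonlin f x := by
  have hfx := hf.2.2.2.2.1 hx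
  have h1 := derivI_hasDeriv le_rfl (derivI_contDiff (k := 1) hg.1) hfx
  have h2 := derivI_hasDeriv le_rfl (derivI_contDiff (k := 1) hf.1) hx
  have h3 := (h1.comp x (derivI_hasDeriv (by norm_num) hf.1 hx) hf.2.2.2.2.1).mul h2
  have h4 := derivI_eq hx (h3.congr_of_mem (f₁ := derivI (g ∘ f))
    (fun y hy => comp_deriv (by norm_num) hf hg hy) hx)
  have p1 := (hg.2.2.2.2.2 _ hfx).ne'
  have p2 := (hf.2.2.2.2.2 _ hx).ne'
  simp only [nonlin]
  rw [h4, comp_deriv (by norm_num) hf hg hx]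
  simp only [Function.comp]
  field_simp

lemma comp_dnonlin {f g : ℝ → ℝ} (hf : IsDk 3 f) (hg : IsDk 3 g) {x : ℝ}
    (hx : x ∈ Icc (0:ℝ) 1) :
    derivI (nonlin (g ∘ f)) x = derivI (nonlin g) (f x) * derivI f x ^ 2
      + nonlin g (f x) * derivI (derivI f) x + derivI (nonlin f) x := by
  have hfx := hf.2.2.2.2.1 hx
  have h1 := derivI_hasDeriv le_rfl (nonlin_contDiff (k := 1) hg) hfx
  have h2 := derivI_hasDeriv (by norm_num) (derivI_contDiff (k := 2) hf.1) hx
  have h0 := derivI_hasDeriv le_rfl (nonlin_contDiff (k := 1) hf) hx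
  have h3 := ((h1.comp x (derivI_hasDeriv (by norm_num) hf.1 hx) hf.2.2.2.2.1).mul h2).add h0
  have h4 := derivI_eq hx (h3.congr_of_mem (f₁ := nonlin (g ∘ f))
    (fun y hy => comp_nonlin (hf.le (by norm_num)) (hg.le (by norm_num)) hy) hx)
  rw [h4]
  simp only [Function.comp]
  ring

lemma single_bound {f : ℝ → ℝ} (hf : IsDk 2 f) {x : ℝ} (hx : x ∈ Icc (0:ℝ) 1) :
    |Real.log (derivI f x)| ≤ nlNorm f := by
  obtain ⟨c, hc, hc1⟩ : ∃ c ∈ Ioo (0:ℝ) 1, derivI f c = (f 1 - f 0) / (1 - 0) := by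
    refine exists_hasDerivAt_eq_slope f (derivI f) zero_lt_one hf.1.continuousOn fun y hy => ?_
    exact (derivI_hasDeriv (by norm_num) hf.1 (Ioo_subset_Icc_self hy)).hasDerivAt
      (Icc_mem_nhds hy.1 hy.2)
  have hc1 : derivI f c = 1 := by rw [hc1, hf.2.1, hf.2.2.1]; norm_num
  have hd : ∀ y ∈ Icc (0:ℝ) 1, HasDerivWithinAt (fun y => Real.log (derivI f y)) (nonlin f y)
      (Icc 0 1) y := fun y hy =>
    (derivI_hasDeriv le_rfl (derivI_contDiff (k := 1) hf.1) hy).log (hf.2.2.2.2.2 y hy).ne'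
  have := (convex_Icc (0:ℝ) 1).norm_image_sub_le_of_norm_hasDerivWithin_le (C := nlNorm f) hd
    (fun y hy => by simpa using abs_nonlin_le hf hy) (Ioo_subset_Icc_self hc) hx
  simp only [hc1, Real.log_one, sub_zero, Real.norm_eq_abs] at this
  refine this.trans (mul_le_of_le_one_right (nlNorm_nonneg f) ?_)
  rw [abs_le]; constructor <;> linarith [hc.1, hc.2, hx.1, hx.2]

lemma id_deriv {x : ℝ} (hx : x ∈ Icc (0:ℝ) 1) : derivI id x = 1 :=
  derivI_eq hx (hasDerivWithinAt_id _ _)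

lemma id_nonlin {x : ℝ} (hx : x ∈ Icc (0:ℝ) 1) : nonlin id x = 0 := by
  have : derivI (derivI id) x = 0 := derivI_eq hx
    ((hasDerivWithinAt_const x (Icc 0 1) (1:ℝ)).congr_of_mem (fun y hy => id_deriv hy) hx)
  simp [nonlin, this]

lemma id_dnonlin {x : ℝ} (hx : x ∈ Icc (0:ℝ) 1) : derivI (nonlin id) x = 0 :=
  derivI_eq hx
    ((hasDerivWithinAt_const x (Icc 0 1) (0:ℝ)).congr_of_mem (fun y hy => id_nonlin hy) hx)

lemma id_isDk (k : ℕ) : IsDk k id :=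
  ⟨contDiff_id.contDiffOn, rfl, rfl, strictMono_id.strictMonoOn _, mapsTo_id _,
    fun x hx => by rw [id_deriv hx]; norm_num⟩

lemma compFrom_isDk {k : ℕ} (hk : 1 ≤ k) (φs : ℕ → ℝ → ℝ) (n : ℕ)
    (h : ∀ j < n, IsDk k (φs j)) : IsDk k (compFrom φs 0 n) := by
  induction n with
  | zero => exact id_isDk k
  | succ m ih =>
    have := (ih fun j hj => h j (by omega)).comp hk (h m (by omega))
    simpa [compFrom] using this

lemma main2 (φs : ℕ → ℝ → ℝ) (n : ℕ) (h : ∀ j < n, IsDk 2 (φs j)) {x : ℝ}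
    (hx : x ∈ Icc (0:ℝ) 1) :
    |Real.log (derivI (compFrom φs 0 n) x)| ≤ ∑ j ∈ Finset.range n, nlNorm (φs j) ∧
    |nonlin (compFrom φs 0 n) x| ≤ (∑ j ∈ Finset.range n, nlNorm (φs j)) *
        Real.exp (∑ j ∈ Finset.range n, nlNorm (φs j)) := by
  induction n with
  | zero => simp [compFrom, id_deriv hx, id_nonlin hx]
  | succ m ih =>
    obtain ⟨i1, i2⟩ := ih fun j hj => h j (by omega)
    have hf := compFrom_isDk (k := 2) (by norm_num) φs m fun j hj => h j (by omega)
    have hg := h m (by omega)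
    have e : compFrom φs 0 (m+1) = φs m ∘ compFrom φs 0 m := by simp [compFrom]
    have hfx := hf.2.2.2.2.1 hx
    have pf := hf.2.2.2.2.2 x hx
    have pg := hg.2.2.2.2.2 _ hfx
    have S0 : 0 ≤ ∑ j ∈ Finset.range m, nlNorm (φs j) :=
      Finset.sum_nonneg fun _ _ => nlNorm_nonneg _
    have b0 := nlNorm_nonneg (φs m)
    rw [e, Finset.sum_range_succ, comp_deriv (by norm_num) hf hg hx, comp_nonlin hf hg hx,
      Real.log_mul pg.ne' pf.ne']
    set S := ∑ j ∈ Finset.range m, nlNorm (φs j)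
    constructor
    · have := single_bound hg hfx
      exact (abs_add_le _ _).trans (by linarith)
    · have hd : derivI (compFrom φs 0 m) x ≤ Real.exp S :=
        (Real.log_le_iff_le_exp pf).1 ((le_abs_self _).trans i1)
      have h1 := abs_nonlin_le hg hfx
      calc _ ≤ |nonlin (φs m) (compFrom φs 0 m x)| * derivI (compFrom φs 0 m) x
              + |nonlin (compFrom φs 0 m) x| := by
              refine (abs_add_le _ _).trans ?_
              rw [abs_mul, abs_of_pos pf]
        _ ≤ nlNorm (φs m) * Real.exp S + S * Real.exp S := by gcongr
        _ = (S + nlNorm (φs m)) * Real.exp S := by ring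
        _ ≤ (S + nlNorm (φs m)) * Real.exp (S + nlNorm (φs m)) :=
          mul_le_mul_of_nonneg_left (Real.exp_le_exp.2 (by linarith)) (by linarith)

lemma deriv_le (φs : ℕ → ℝ → ℝ) (n : ℕ) (h : ∀ j < n, IsDk 2 (φs j)) {x : ℝ}
    (hx : x ∈ Icc (0:ℝ) 1) :
    Real.exp (-(∑ j ∈ Finset.range n, nlNorm (φs j))) ≤ derivI (compFrom φs 0 n) x ∧
      derivI (compFrom φs 0 n) x ≤ Real.exp (∑ j ∈ Finset.range n, nlNorm (φs j)) ∧
      |derivI (derivI (compFrom φs 0 n)) x| ≤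
        (∑ j ∈ Finset.range n, nlNorm (φs j)) *
          Real.exp (2 * ∑ j ∈ Finset.range n, nlNorm (φs j)) := by
  obtain ⟨i1, i2⟩ := main2 φs n h hx
  have hf := compFrom_isDk (k := 2) (by norm_num) φs n h
  have pf := hf.2.2.2.2.2 x hx
  have hu := (Real.log_le_iff_le_exp pf).1 (abs_le.1 i1).2
  refine ⟨(Real.le_log_iff_exp_le pf).1 (abs_le.1 i1).1, hu, ?_⟩
  have S0 : 0 ≤ ∑ j ∈ Finset.range n, nlNorm (φs j) :=
    Finset.sum_nonneg fun _ _ => nlNorm_nonneg _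
  have e : derivI (derivI (compFrom φs 0 n)) x =
      nonlin (compFrom φs 0 n) x * derivI (compFrom φs 0 n) x := by
    simp only [nonlin]; field_simp
  rw [e, abs_mul, abs_of_pos pf, two_mul, Real.exp_add, ← mul_assoc]
  gcongr

lemma main3 (φs : ℕ → ℝ → ℝ) (n : ℕ) (h : ∀ j < n, IsDk 3 (φs j)) {x : ℝ}
    (hx : x ∈ Icc (0:ℝ) 1) :
    |derivI (nonlin (compFrom φs 0 n)) x| ≤ (1 + ∑ j ∈ Finset.range n, nlNorm (φs j)) *
          Real.exp (2 * ∑ j ∈ Finset.range n, nlNorm (φs j)) *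
          ∑ j ∈ Finset.range n, nlNorm1 (φs j) := by
  induction n with
  | zero => simp [compFrom, id_dnonlin hx]
  | succ m ih =>
    have i1 := ih fun j hj => h j (by omega)
    have hf := compFrom_isDk (k := 3) (by norm_num) φs m fun j hj => h j (by omega)
    have hg := h m (by omega)
    have e : compFrom φs 0 (m+1) = φs m ∘ compFrom φs 0 m := by simp [compFrom]
    have hfx := hf.2.2.2.2.1 hx
    have pf := hf.2.2.2.2.2 x hx
    have S0 : 0 ≤ ∑ j ∈ Finset.range m, nlNorm (φs j) :=
      Finset.sum_nonneg fun _ _ => nlNorm_nonneg _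
    have T0 : 0 ≤ ∑ j ∈ Finset.range m, nlNorm1 (φs j) :=
      Finset.sum_nonneg fun _ _ => (nlNorm_nonneg _).trans (le_max_left _ _)
    have b0 := nlNorm_nonneg (φs m)
    have b1 : nlNorm (φs m) ≤ nlNorm1 (φs m) := le_max_left _ _
    obtain ⟨-, hd, hdd⟩ := deriv_le φs m (fun j hj => (h j (by omega)).le (by norm_num)) hx
    have h1 := (abs_nonlin_le (hg.le (by norm_num)) hfx).trans b1
    have h2 := abs_dnonlin_le hg hfx
    rw [e, Finset.sum_range_succ, Finset.sum_range_succ, comp_dnonlin hf hg hx]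
    set S := ∑ j ∈ Finset.range m, nlNorm (φs j)
    set T := ∑ j ∈ Finset.range m, nlNorm1 (φs j)
    have b2 : 0 ≤ nlNorm1 (φs m) := b0.trans b1
    calc _ ≤ |derivI (nonlin (φs m)) (compFrom φs 0 m x)| * derivI (compFrom φs 0 m) x ^ 2
            + |nonlin (φs m) (compFrom φs 0 m x)| * |derivI (derivI (compFrom φs 0 m)) x|
              + |derivI (nonlin (compFrom φs 0 m)) x| := by
            refine (abs_add_le _ _).trans ?_
            gcongr
            refine (abs_add_le _ _).trans ?_
            rw [abs_mul, abs_mul, abs_of_pos (pow_pos pf 2)]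
      _ ≤ nlNorm1 (φs m) * Real.exp S ^ 2 + nlNorm1 (φs m) * (S * Real.exp (2 * S))
            + (1 + S) * Real.exp (2 * S) * T := by gcongr
      _ = (1 + S) * Real.exp (2 * S) * (T + nlNorm1 (φs m)) := by
            rw [two_mul, Real.exp_add]; ring
      _ ≤ (1 + (S + nlNorm (φs m))) * Real.exp (2 * (S + nlNorm (φs m))) * (T + nlNorm1 (φs m)) :=
          mul_le_mul_of_nonneg_right (mul_le_mul (by linarith) (Real.exp_le_exp.2 (by linarith))
            (Real.exp_pos _).le (by linarith)) (by linarith)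

/-- bounds for finite compositions of diffeomorphisms in terms of the
total nonlinearity `S = Σ ‖φ_j‖`: `e^{-S} ≤ φ' ≤ e^S`, `|φ''| ≤ S e^{2S}`,
`‖φ‖ ≤ S e^S`, and (for `C³` maps) `‖φ‖₁ ≤ (1 + S) e^{2S} Σ ‖φ_j‖₁`. -/
theorem finite_composition_bounds (n : ℕ) (φs : ℕ → ℝ → ℝ)
    (hφ : ∀ j < n, IsDk 2 (φs j)) :
    (∀ x ∈ Icc (0 : ℝ) 1,
      Real.exp (-(∑ j ∈ Finset.range n, nlNorm (φs j))) ≤ derivI (compFrom φs 0 n) x ∧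
      derivI (compFrom φs 0 n) x ≤ Real.exp (∑ j ∈ Finset.range n, nlNorm (φs j)) ∧
      |derivI (derivI (compFrom φs 0 n)) x| ≤
        (∑ j ∈ Finset.range n, nlNorm (φs j)) *
          Real.exp (2 * ∑ j ∈ Finset.range n, nlNorm (φs j))) ∧
    nlNorm (compFrom φs 0 n) ≤
      (∑ j ∈ Finset.range n, nlNorm (φs j)) *
        Real.exp (∑ j ∈ Finset.range n, nlNorm (φs j)) ∧
    ((∀ j < n, IsDk 3 (φs j)) →
      nlNorm1 (compFrom φs 0 n) ≤
        (1 + ∑ j ∈ Finset.range n, nlNorm (φs j)) *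
          Real.exp (2 * ∑ j ∈ Finset.range n, nlNorm (φs j)) *
          ∑ j ∈ Finset.range n, nlNorm1 (φs j)) := by
  have S0 : 0 ≤ ∑ j ∈ Finset.range n, nlNorm (φs j) :=
    Finset.sum_nonneg fun _ _ => nlNorm_nonneg _
  haveI : Nonempty (Icc (0:ℝ) 1) := ⟨⟨0, by simp⟩⟩
  have hN : nlNorm (compFrom φs 0 n) ≤ (∑ j ∈ Finset.range n, nlNorm (φs j)) *
        Real.exp (∑ j ∈ Finset.range n, nlNorm (φs j)) :=
    ciSup_le fun x => (main2 φs n hφ x.2).2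
  refine ⟨fun x hx => deriv_le φs n hφ hx, hN, fun h3 => max_le (hN.trans ?_)
    (ciSup_le fun x => main3 φs n h3 x.2)⟩
  have hST : ∑ j ∈ Finset.range n, nlNorm (φs j) ≤ ∑ j ∈ Finset.range n, nlNorm1 (φs j) :=
    Finset.sum_le_sum fun _ _ => le_max_left _ _
  set S := ∑ j ∈ Finset.range n, nlNorm (φs j)
  set T := ∑ j ∈ Finset.range n, nlNorm1 (φs j)
  calc S * Real.exp S ≤ T * Real.exp (2 * S) := by gcongr <;> linarith
    _ = 1 * Real.exp (2 * S) * T := by ring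
    _ ≤ _ := by gcongr <;> linarith

end
end

section
/- Let T be a countable linearly ordered set and let (φ_τ)_{τ∈T} be a family with φ_τ ∈ D³([0,1]) and Σ_{τ∈T} ‖φ_τ‖₁ < ∞. For any bijection θ : ℕ → T, let ψ_n denote the composition of the maps φ_{θ(0)}, …, φ_{θ(n−1)} taken in the order induced by T. Then (ψ_n) is a Cauchy sequence with respect to the metric d(φ,ψ) = sup_{x∈[0,1]} |Nφ(x) − Nψ(x)|, it converges to an element of D²([0,1]), and the limit does not depend on the choice of the bijection θ. -/
open Set Filter Topology

noncomputable section

/-- The composition of the finitely many diffeomorphisms `φ_τ`, `τ ∈ s`, in the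
order of the linearly ordered index set (smallest time applied first). -/
def ordComp {T : Type*} [LinearOrder T] (φ : T → ℝ → ℝ) (s : Finset T) : ℝ → ℝ :=
  (s.sort (· ≤ ·)).foldl (fun g τ => φ τ ∘ g) id

abbrev II : Set ℝ := Icc (0 : ℝ) 1

lemma udI : UniqueDiffOn ℝ II := uniqueDiffOn_Icc zero_lt_one

lemma dk_mono {k l : ℕ} (h : l ≤ k) {f : ℝ → ℝ} (hf : IsDk k f) : IsDk l f :=
  ⟨hf.1.of_le (by exact_mod_cast h), hf.2⟩

lemma dk_d0 {f : ℝ → ℝ} (hf : IsDk 3 f) {x : ℝ} (hx : x ∈ II) :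
    HasDerivWithinAt f (derivI f x) II x :=
  ((hf.1.differentiableOn (by norm_num)) x hx).hasDerivWithinAt

lemma dk_c2 {f : ℝ → ℝ} (hf : IsDk 3 f) : ContDiffOn ℝ 2 (derivI f) II :=
  hf.1.derivWithin udI (by norm_num)

lemma dk_c1 {f : ℝ → ℝ} (hf : IsDk 3 f) : ContDiffOn ℝ 1 (derivI (derivI f)) II :=
  (dk_c2 hf).derivWithin udI (by norm_num)

lemma dk_pos {f : ℝ → ℝ} (hf : IsDk 3 f) {x : ℝ} (hx : x ∈ II) : 0 < derivI f x :=
  hf.2.2.2.2.2 x hx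

lemma dk_maps {f : ℝ → ℝ} (hf : IsDk 3 f) {x : ℝ} (hx : x ∈ II) : f x ∈ II :=
  hf.2.2.2.2.1 hx

lemma dk_N1 {f : ℝ → ℝ} (hf : IsDk 3 f) : ContDiffOn ℝ 1 (nonlin f) II :=
  (dk_c1 hf).div ((dk_c2 hf).of_le (by norm_num)) (fun x hx => (dk_pos hf hx).ne')

lemma dk_d1 {f : ℝ → ℝ} (hf : IsDk 3 f) {x : ℝ} (hx : x ∈ II) :
    HasDerivWithinAt (derivI f) (nonlin f x * derivI f x) II x := by
  have h := (((dk_c2 hf).differentiableOn (by norm_num)) x hx).hasDerivWithinAt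
  have e : nonlin f x * derivI f x = derivWithin (derivI f) II x := by
    unfold nonlin
    rw [div_mul_cancel₀ _ (dk_pos hf hx).ne']; rfl
  rw [e]; exact h

lemma dk_dN {f : ℝ → ℝ} (hf : IsDk 3 f) {x : ℝ} (hx : x ∈ II) :
    HasDerivWithinAt (nonlin f) (derivI (nonlin f) x) II x :=
  (((dk_N1 hf).differentiableOn (by norm_num)) x hx).hasDerivWithinAt

lemma sup_bd {g : ℝ → ℝ} (hg : ContinuousOn g II) {x : ℝ} (hx : x ∈ II) :
    |g x| ≤ ⨆ x : Icc (0 : ℝ) 1, |g x.1| := by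
  have hb : BddAbove (range fun x : Icc (0 : ℝ) 1 => |g x.1|) := by
    have := (isCompact_Icc (a := (0:ℝ)) (b := 1)).bddAbove_image hg.abs
    rwa [image_eq_range] at this
  exact le_ciSup hb ⟨x, hx⟩

lemma n1_nonneg (f : ℝ → ℝ) : 0 ≤ nlNorm1 f :=
  le_max_of_le_left (Real.iSup_nonneg fun _ => abs_nonneg _)

lemma n1_bd {f : ℝ → ℝ} (hf : IsDk 3 f) {x : ℝ} (hx : x ∈ II) : |nonlin f x| ≤ nlNorm1 f :=
  (sup_bd (dk_N1 hf).continuousOn hx).trans (le_max_left _ _)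

lemma n1_bd' {f : ℝ → ℝ} (hf : IsDk 3 f) {x : ℝ} (hx : x ∈ II) :
    |derivI (nonlin f) x| ≤ nlNorm1 f :=
  (sup_bd (((dk_N1 hf).derivWithin udI (m := 0) (by norm_num)).continuousOn) hx).trans
    (le_max_right _ _)

lemma lip_of {g g' : ℝ → ℝ} {C : ℝ} (h : ∀ x ∈ II, HasDerivWithinAt g (g' x) II x)
    (hC : ∀ x ∈ II, |g' x| ≤ C) {x y : ℝ} (hx : x ∈ II) (hy : y ∈ II) :
    |g x - g y| ≤ C * |x - y| :=
  Convex.norm_image_sub_le_of_norm_hasDerivWithin_le h hC (convex_Icc 0 1) hy hx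

lemma n1_lip {f : ℝ → ℝ} (hf : IsDk 3 f) {x y : ℝ} (hx : x ∈ II) (hy : y ∈ II) :
    |nonlin f x - nonlin f y| ≤ nlNorm1 f * |x - y| :=
  lip_of (fun _ h => dk_dN hf h) (fun _ h => n1_bd' hf h) hx hy

lemma abs_sub_le_one' {x y : ℝ} (hx : x ∈ II) (hy : y ∈ II) : |x - y| ≤ 1 := by
  rw [abs_le]; constructor <;> linarith [hx.1, hx.2, hy.1, hy.2]

lemma exists_one {f : ℝ → ℝ} (hf : IsDk 3 f) : ∃ c ∈ II, derivI f c = 1 := by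
  obtain ⟨c, hc, h⟩ := exists_hasDerivAt_eq_slope f (derivI f) (zero_lt_one)
    hf.1.continuousOn (fun x hx => (dk_d0 hf (Ioo_subset_Icc_self hx)).hasDerivAt
      (Icc_mem_nhds hx.1 hx.2))
  refine ⟨c, Ioo_subset_Icc_self hc, ?_⟩
  rw [h, hf.2.1, hf.2.2.1]; norm_num

lemma d_le {f : ℝ → ℝ} (hf : IsDk 3 f) {x : ℝ} (hx : x ∈ II) :
    derivI f x ≤ Real.exp (nlNorm1 f) := by
  obtain ⟨c, hc, h1⟩ := exists_one hf
  have hl : |Real.log (derivI f x) - Real.log (derivI f c)| ≤ nlNorm1 f * |x - c| := by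
    refine lip_of (g := fun x => Real.log (derivI f x)) (g' := nonlin f) (fun y hy => ?_)
      (fun y hy => n1_bd hf hy) hx hc
    have := (dk_d1 hf hy).log (dk_pos hf hy).ne'
    rwa [mul_div_cancel_right₀ _ (dk_pos hf hy).ne'] at this
  rw [h1, Real.log_one, sub_zero] at hl
  have h2 := mul_le_mul_of_nonneg_left (abs_sub_le_one' hx hc) (n1_nonneg f)
  rw [← Real.log_le_iff_le_exp (dk_pos hf hx)]
  linarith [le_abs_self (Real.log (derivI f x))]

lemma d_near {f : ℝ → ℝ} (hf : IsDk 3 f) {x : ℝ} (hx : x ∈ II) :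
    |derivI f x - 1| ≤ nlNorm1 f * Real.exp (nlNorm1 f) := by
  obtain ⟨c, hc, h1⟩ := exists_one hf
  rw [← h1]
  have h0 : 0 ≤ nlNorm1 f * Real.exp (nlNorm1 f) :=
    mul_nonneg (n1_nonneg f) (Real.exp_pos _).le
  refine (lip_of (C := nlNorm1 f * Real.exp (nlNorm1 f)) (fun y hy => dk_d1 hf hy)
    (fun y hy => ?_) hx hc).trans ?_
  · rw [abs_mul, abs_of_pos (dk_pos hf hy)]
    exact mul_le_mul (n1_bd hf hy) (d_le hf hy) (dk_pos hf hy).le (n1_nonneg f)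
  · exact mul_le_of_le_one_right h0 (abs_sub_le_one' hx hc)

lemma id_near {f : ℝ → ℝ} (hf : IsDk 3 f) {x : ℝ} (hx : x ∈ II) :
    |f x - x| ≤ nlNorm1 f * Real.exp (nlNorm1 f) := by
  have h0 : 0 ≤ nlNorm1 f * Real.exp (nlNorm1 f) :=
    mul_nonneg (n1_nonneg f) (Real.exp_pos _).le
  have hz : (0:ℝ) ∈ II := ⟨le_rfl, zero_le_one⟩
  have := lip_of (g := fun x => f x - x) (fun y hy => (dk_d0 hf hy).sub (hasDerivWithinAt_id y II))
    (fun y hy => d_near hf hy) hx hz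
  simp only [hf.2.1, sub_zero] at this
  have h2 := abs_sub_le_one' hx hz
  rw [sub_zero] at h2
  exact this.trans (mul_le_of_le_one_right h0 h2)

/-! composition -/

lemma comp_d0 {f g : ℝ → ℝ} (hf : IsDk 3 f) (hg : IsDk 3 g) {x : ℝ} (hx : x ∈ II) :
    derivI (g ∘ f) x = derivI g (f x) * derivI f x :=
  ((dk_d0 hg (dk_maps hf hx)).comp x (dk_d0 hf hx) (fun _ h => dk_maps hf h)).derivWithin
    (udI x hx)

lemma comp_dk {f g : ℝ → ℝ} (hf : IsDk 3 f) (hg : IsDk 3 g) : IsDk 3 (g ∘ f) := by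
  refine ⟨hg.1.comp hf.1 hf.2.2.2.2.1, ?_, ?_, hg.2.2.2.1.comp hf.2.2.2.1 hf.2.2.2.2.1,
    hg.2.2.2.2.1.comp hf.2.2.2.2.1, fun x hx => ?_⟩
  · simp [hf.2.1, hg.2.1]
  · simp [hf.2.2.1, hg.2.2.1]
  · rw [comp_d0 hf hg hx]
    exact mul_pos (dk_pos hg (dk_maps hf hx)) (dk_pos hf hx)

lemma comp_N {f g : ℝ → ℝ} (hf : IsDk 3 f) (hg : IsDk 3 g) {x : ℝ} (hx : x ∈ II) :
    nonlin (g ∘ f) x = nonlin g (f x) * derivI f x + nonlin f x := by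
  have h1 : HasDerivWithinAt (derivI (g ∘ f))
      (nonlin g (f x) * derivI g (f x) * derivI f x * derivI f x
        + derivI g (f x) * (nonlin f x * derivI f x)) II x := by
    have := ((dk_d1 hg (dk_maps hf hx)).comp x (dk_d0 hf hx)
      (fun _ h => dk_maps hf h)).mul (dk_d1 hf hx)
    exact this.congr (fun y hy => comp_d0 hf hg hy) (comp_d0 hf hg hx)
  have h2 := h1.derivWithin (udI x hx)
  have p1 := (dk_pos hg (dk_maps hf hx)).ne'
  have p2 := (dk_pos hf hx).ne'
  have : nonlin (g ∘ f) x = derivWithin (derivI (g ∘ f)) II x / derivI (g ∘ f) x := rfl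
  rw [this, h2, comp_d0 hf hg hx]
  field_simp

lemma id_d (x : ℝ) (hx : x ∈ II) : derivI id x = 1 := derivWithin_id x II (udI x hx)

lemma id_dk : IsDk 3 id :=
  ⟨contDiffOn_id, rfl, rfl, strictMono_id.strictMonoOn _, fun _ h => h,
    fun x hx => by rw [id_d x hx]; exact one_pos⟩

lemma id_N {x : ℝ} (hx : x ∈ II) : nonlin id x = 0 := by
  have : derivWithin (derivI id) II x = 0 := by
    rw [derivWithin_congr (f := fun _ => (1:ℝ)) (fun y hy => id_d y hy) (id_d x hx)]
    simp
  have e : nonlin id x = derivWithin (derivI id) II x / derivI id x := rfl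
  rw [e, this, zero_div]

def Lc (K : ℝ) : ℝ := Real.exp K * Real.exp K * (1 + K)

/-- uniform bounds for a finite composition with total norm `S ≤ K` -/
structure BD (K S : ℝ) (f : ℝ → ℝ) : Prop where
  S0 : 0 ≤ S
  dk : IsDk 3 f
  d : ∀ x ∈ II, derivI f x ≤ Real.exp S
  n : ∀ x ∈ II, |nonlin f x| ≤ S * Real.exp K
  l : ∀ x ∈ II, ∀ y ∈ II, |nonlin f x - nonlin f y| ≤ S * Lc K * |x - y|

lemma BD_id (K : ℝ) : BD K 0 id :=
  ⟨le_rfl, id_dk, fun x hx => by rw [id_d x hx]; simp, fun x hx => by rw [id_N hx]; simp,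
    fun x hx y hy => by rw [id_N hx, id_N hy]; simp⟩

lemma BD_step {K S : ℝ} {f g : ℝ → ℝ} (hf : BD K S f) (hg : IsDk 3 g)
    (hK : S + nlNorm1 g ≤ K) : BD K (S + nlNorm1 g) (g ∘ f) := by
  have a0 := n1_nonneg g
  have hSK : S ≤ K := by linarith
  have eK := Real.exp_pos K
  have eSK := Real.exp_le_exp.2 hSK
  have S0 := hf.S0
  refine ⟨by linarith, comp_dk hf.dk hg, fun x hx => ?_, fun x hx => ?_, fun x hx y hy => ?_⟩
  · rw [comp_d0 hf.dk hg hx, Real.exp_add, mul_comm]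
    exact mul_le_mul (hf.d x hx) (d_le hg (dk_maps hf.dk hx)) (dk_pos hg (dk_maps hf.dk hx)).le
      (Real.exp_pos _).le
  · rw [comp_N hf.dk hg hx]
    have h1 : |nonlin g (f x) * derivI f x| ≤ nlNorm1 g * Real.exp K := by
      rw [abs_mul, abs_of_pos (dk_pos hf.dk hx)]
      exact mul_le_mul (n1_bd hg (dk_maps hf.dk hx)) ((hf.d x hx).trans eSK)
        (dk_pos hf.dk hx).le a0
    have := abs_add_le (nonlin g (f x) * derivI f x) (nonlin f x)
    linarith [hf.n x hx]
  · rw [comp_N hf.dk hg hx, comp_N hf.dk hg hy]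
    have mx := dk_maps hf.dk hx
    have my := dk_maps hf.dk hy
    have q0 := abs_nonneg (x - y)
    have b1 : |f x - f y| ≤ Real.exp K * |x - y| :=
      lip_of (fun z hz => dk_d0 hf.dk hz) (fun z hz => by
        rw [abs_of_pos (dk_pos hf.dk hz)]; exact (hf.d z hz).trans eSK) hx hy
    have b2 : |derivI f x - derivI f y| ≤ K * Real.exp K * Real.exp K * |x - y| :=
      lip_of (fun z hz => dk_d1 hf.dk hz) (fun z hz => by
        rw [abs_mul, abs_of_pos (dk_pos hf.dk hz)]
        refine mul_le_mul ((hf.n z hz).trans ?_) ((hf.d z hz).trans eSK) (dk_pos hf.dk hz).le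
          (by nlinarith)
        exact mul_le_mul_of_nonneg_right hSK eK.le) hx hy
    have c1 : |(nonlin g (f x) - nonlin g (f y)) * derivI f x|
        ≤ nlNorm1 g * (Real.exp K * |x - y|) * Real.exp K := by
      rw [abs_mul, abs_of_pos (dk_pos hf.dk hx)]
      exact mul_le_mul ((n1_lip hg mx my).trans (mul_le_mul_of_nonneg_left b1 a0))
        ((hf.d x hx).trans eSK) (dk_pos hf.dk hx).le (by positivity)
    have c2 : |nonlin g (f y) * (derivI f x - derivI f y)|
        ≤ nlNorm1 g * (K * Real.exp K * Real.exp K * |x - y|) := by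
      rw [abs_mul]
      exact mul_le_mul (n1_bd hg my) b2 (abs_nonneg _) a0
    have c3 := hf.l x hx y hy
    have e : nonlin g (f x) * derivI f x + nonlin f x - (nonlin g (f y) * derivI f y + nonlin f y)
      = (nonlin g (f x) - nonlin g (f y)) * derivI f x
        + nonlin g (f y) * (derivI f x - derivI f y) + (nonlin f x - nonlin f y) := by ring
    rw [e]
    refine (abs_add_three _ _ _).trans ?_
    refine (add_le_add (add_le_add c1 c2) c3).trans (le_of_eq ?_)
    unfold Lc; ring

def Cc (K : ℝ) : ℝ :=
  Real.exp K * (K * Real.exp K * Real.exp K + K * Lc K * Real.exp K + 1)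

lemma insert_est {K S S' : ℝ} {g h f : ℝ → ℝ} (hg : BD K S g) (hh : BD K S' h) (hf : IsDk 3 f)
    (hS : S ≤ K) (hS' : S' ≤ K) (ha : nlNorm1 f ≤ K) {x : ℝ} (hx : x ∈ II) :
    |nonlin (h ∘ f ∘ g) x - nonlin (h ∘ g) x| ≤ Cc K * nlNorm1 f := by
  have key : ∀ y ∈ II, |nonlin (h ∘ f) y - nonlin h y| ≤
      (K * Real.exp K * Real.exp K + K * Lc K * Real.exp K + 1) * nlNorm1 f := by
    intro y hy
    have a0 := n1_nonneg f
    have K0 : 0 ≤ K := a0.trans ha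
    have eK := Real.exp_pos K
    have L0 : 0 ≤ Lc K := by unfold Lc; positivity
    have my := dk_maps hf hy
    have hea : nlNorm1 f * Real.exp (nlNorm1 f) ≤ nlNorm1 f * Real.exp K :=
      mul_le_mul_of_nonneg_left (Real.exp_le_exp.2 ha) a0
    rw [comp_N hf hh.dk hy]
    have e : nonlin h (f y) * derivI f y + nonlin f y - nonlin h y
      = nonlin h (f y) * (derivI f y - 1) + (nonlin h (f y) - nonlin h y) + nonlin f y := by ring
    have c1 : |nonlin h (f y) * (derivI f y - 1)| ≤ K * Real.exp K * (nlNorm1 f * Real.exp K) := by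
      rw [abs_mul]
      exact mul_le_mul ((hh.n _ my).trans (mul_le_mul_of_nonneg_right hS' eK.le))
        ((d_near hf hy).trans hea) (abs_nonneg _) (by positivity)
    have c2 : |nonlin h (f y) - nonlin h y| ≤ K * Lc K * (nlNorm1 f * Real.exp K) :=
      (hh.l _ my _ hy).trans (mul_le_mul (mul_le_mul_of_nonneg_right hS' L0)
        ((id_near hf hy).trans hea) (abs_nonneg _) (by positivity))
    rw [e]
    refine (abs_add_three _ _ _).trans ?_
    refine (add_le_add (add_le_add c1 c2) (n1_bd hf hy)).trans (le_of_eq ?_)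
    ring
  have e1 : nonlin (h ∘ f ∘ g) x = nonlin (h ∘ f) (g x) * derivI g x + nonlin g x :=
    comp_N (g := h ∘ f) hg.dk (comp_dk hf hh.dk) hx
  rw [e1, comp_N hg.dk hh.dk hx]
  have e : nonlin (h ∘ f) (g x) * derivI g x + nonlin g x - (nonlin h (g x) * derivI g x + nonlin g x)
    = derivI g x * (nonlin (h ∘ f) (g x) - nonlin h (g x)) := by ring
  rw [e, abs_mul, abs_of_pos (dk_pos hg.dk hx)]
  refine (mul_le_mul ((hg.d x hx).trans (Real.exp_le_exp.2 hS)) (key _ (dk_maps hg.dk hx))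
    (abs_nonneg _) (Real.exp_pos _).le).trans (le_of_eq ?_)
  unfold Cc; ring

section comp
variable {T : Type*}

def lcomp (φ : T → ℝ → ℝ) (l : List T) (f : ℝ → ℝ) : ℝ → ℝ :=
  l.foldl (fun g τ => φ τ ∘ g) f

lemma lcomp_eq (φ : T → ℝ → ℝ) (l : List T) (f : ℝ → ℝ) :
    lcomp φ l f = lcomp φ l id ∘ f := by
  induction l generalizing f with
  | nil => rfl
  | cons a l ih =>
    change lcomp φ l (φ a ∘ f) = lcomp φ l (φ a ∘ id) ∘ f
    rw [ih, ih (φ a ∘ id)]; rfl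

lemma lcomp_BD {K : ℝ} {φ : T → ℝ → ℝ} (hD : ∀ τ, IsDk 3 (φ τ)) (l : List T) :
    ∀ {S : ℝ} {f : ℝ → ℝ}, BD K S f → S + (l.map fun τ => nlNorm1 (φ τ)).sum ≤ K →
    BD K (S + (l.map fun τ => nlNorm1 (φ τ)).sum) (lcomp φ l f) := by
  induction l with
  | nil => intro S f h _; simpa [lcomp] using h
  | cons a l ih =>
    intro S f h hK
    rw [List.map_cons, List.sum_cons, ← add_assoc] at hK ⊢
    have : 0 ≤ (l.map fun τ => nlNorm1 (φ τ)).sum :=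
      List.sum_nonneg (by simp only [List.mem_map]; rintro _ ⟨t, -, rfl⟩; exact n1_nonneg _)
    exact ih (BD_step h (hD a) (by linarith)) hK

lemma sort_split [LinearOrder T] [DecidableEq T] (s : Finset T) {a : T} (ha : a ∉ s) :
    ∃ l₁ l₂ : List T, (insert a s).sort (· ≤ ·) = l₁ ++ a :: l₂ ∧ s.sort (· ≤ ·) = l₁ ++ l₂ := by
  have hm : a ∈ (insert a s).sort (· ≤ ·) := by
    rw [Finset.mem_sort]; exact Finset.mem_insert_self a s
  obtain ⟨l₁, l₂, h⟩ := List.append_of_mem hm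
  refine ⟨l₁, l₂, h, ?_⟩
  have hp := (insert a s).pairwise_sort (· ≤ ·)
  rw [h] at hp
  have hsub : (l₁ ++ l₂).Sublist (l₁ ++ a :: l₂) :=
    List.Sublist.append_left (List.sublist_cons_self a l₂) l₁
  have hnd : (l₁ ++ a :: l₂).Nodup := h ▸ (insert a s).sort_nodup (· ≤ ·)
  refine List.Perm.eq_of_pairwise (le := (· ≤ ·)) (fun x y _ _ h1 h2 => le_antisymm h1 h2)
    (s.pairwise_sort _) (hp.sublist hsub) ?_
  have p : (a :: s.sort (· ≤ ·)).Perm (a :: (l₁ ++ l₂)) := by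
    refine List.Perm.trans ?_ List.perm_middle
    rw [← h]
    refine (List.perm_ext_iff_of_nodup ?_ ?_).2 ?_
    · exact List.nodup_cons.2 ⟨by simpa using ha, s.sort_nodup _⟩
    · exact Finset.sort_nodup _ _
    · intro b; simp
  exact p.cons_inv

variable [LinearOrder T] {φ : T → ℝ → ℝ}

lemma sum_sort (s : Finset T) (F : T → ℝ) :
    ((s.sort (· ≤ ·)).map F).sum = ∑ τ ∈ s, F τ := by
  rw [← List.sum_toFinset F (s.sort_nodup _), Finset.sort_toFinset]

lemma ordComp_dk (hD : ∀ τ, IsDk 3 (φ τ)) (s : Finset T) : IsDk 3 (ordComp φ s) :=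
  (lcomp_BD hD (s.sort (· ≤ ·)) (BD_id _) le_rfl).dk

lemma ordComp_insert [DecidableEq T] (hD : ∀ τ, IsDk 3 (φ τ)) (hs : Summable fun τ => nlNorm1 (φ τ))
    (s : Finset T) {a : T} (ha : a ∉ s) {x : ℝ} (hx : x ∈ II) :
    |nonlin (ordComp φ (insert a s)) x - nonlin (ordComp φ s) x|
      ≤ Cc (∑' τ, nlNorm1 (φ τ)) * nlNorm1 (φ a) := by
  obtain ⟨l₁, l₂, h1, h2⟩ := sort_split s ha
  set K := ∑' τ, nlNorm1 (φ τ) with hK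
  have hsum : ((l₁ ++ a :: l₂).map fun τ => nlNorm1 (φ τ)).sum ≤ K := by
    rw [← h1, sum_sort]
    exact hs.sum_le_tsum _ (fun i _ => n1_nonneg _)
  have nn : ∀ l : List T, 0 ≤ (l.map fun τ => nlNorm1 (φ τ)).sum := fun l =>
    List.sum_nonneg (by simp only [List.mem_map]; rintro _ ⟨t, -, rfl⟩; exact n1_nonneg _)
  simp only [List.map_append, List.map_cons, List.sum_append, List.sum_cons] at hsum
  have n1 := nn l₁
  have n2 := nn l₂
  have na := n1_nonneg (φ a)
  have B1 := lcomp_BD (K := K) hD l₁ (BD_id K) (by linarith)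
  have B2 := lcomp_BD (K := K) hD l₂ (BD_id K) (by linarith)
  have e1 : ordComp φ (insert a s) = lcomp φ l₂ id ∘ φ a ∘ lcomp φ l₁ id := by
    rw [← lcomp_eq φ l₂]
    unfold ordComp; rw [h1, List.foldl_append]; rfl
  have e2 : ordComp φ s = lcomp φ l₂ id ∘ lcomp φ l₁ id := by
    rw [← lcomp_eq φ l₂]
    unfold ordComp; rw [h2, List.foldl_append]; rfl
  rw [e1, e2]
  exact insert_est B1 B2 (hD a) (by linarith) (by linarith) (by linarith) hx

lemma Cc_nonneg {K : ℝ} (h : 0 ≤ K) : 0 ≤ Cc K := by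
  unfold Cc Lc; positivity

lemma ordComp_union [DecidableEq T] (hD : ∀ τ, IsDk 3 (φ τ)) (hs : Summable fun τ => nlNorm1 (φ τ))
    (s u : Finset T) (hu : Disjoint u s) {x : ℝ} (hx : x ∈ II) :
    |nonlin (ordComp φ (u ∪ s)) x - nonlin (ordComp φ s) x|
      ≤ Cc (∑' τ, nlNorm1 (φ τ)) * ∑ τ ∈ u, nlNorm1 (φ τ) := by
  induction u using Finset.induction_on with
  | empty => simp
  | insert a u ha ih =>
    rw [Finset.disjoint_insert_left] at hu
    have := ih hu.2
    have h2 := ordComp_insert hD hs (u ∪ s) (a := a) (by simp [ha, hu.1]) hx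
    rw [Finset.insert_union, Finset.sum_insert ha, mul_add]
    exact (abs_sub_le _ (nonlin (ordComp φ (u ∪ s)) x) _).trans (add_le_add h2 this)

lemma cauchy_net (hD : ∀ τ, IsDk 3 (φ τ)) (hs : Summable fun τ => nlNorm1 (φ τ))
    {ε : ℝ} (hε : 0 < ε) : ∃ s₀ : Finset T, ∀ s t : Finset T, s₀ ⊆ s → s₀ ⊆ t → ∀ x ∈ II,
      |nonlin (ordComp φ s) x - nonlin (ordComp φ t) x| ≤ ε := by
  set K := ∑' τ, nlNorm1 (φ τ) with hK
  have K0 : 0 ≤ K := tsum_nonneg fun _ => n1_nonneg _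
  have C0 := Cc_nonneg K0
  obtain ⟨s₀, h⟩ := summable_iff_vanishing_norm.1 hs (ε / 2 / (Cc K + 1)) (by positivity)
  have main : ∀ s : Finset T, s₀ ⊆ s → ∀ x ∈ II,
      |nonlin (ordComp φ s) x - nonlin (ordComp φ s₀) x| ≤ ε / 2 := by
    intro s hss x hx
    have h1 := ordComp_union hD hs s₀ (s \ s₀) Finset.sdiff_disjoint hx
    rw [Finset.sdiff_union_of_subset hss] at h1
    have h2 := (le_abs_self _).trans (h (s \ s₀) Finset.sdiff_disjoint).le
    refine h1.trans ((mul_le_mul_of_nonneg_left h2 C0).trans ?_)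
    rw [← mul_div_assoc, div_le_iff₀ (by positivity)]
    nlinarith
  refine ⟨s₀, fun s t h1 h2 x hx => ?_⟩
  have a1 := main s h1 x hx
  have a2 := main t h2 x hx
  rw [abs_sub_comm] at a2
  have := abs_sub_le (nonlin (ordComp φ s) x) (nonlin (ordComp φ s₀) x) (nonlin (ordComp φ t) x)
  linarith

end comp

lemma exists_of_nonlin {f : ℝ → ℝ} (hf : ContinuousOn f II) :
    ∃ Φ : ℝ → ℝ, IsDk 2 Φ ∧ ∀ x ∈ II, nonlin Φ x = f x := by
  let F : ℝ → ℝ := IccExtend (zero_le_one (α := ℝ)) (II.restrict f)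
  have hF : Continuous F := (continuousOn_iff_continuous_restrict.1 hf).Icc_extend'
  have hFf : ∀ x ∈ II, F x = f x := fun x hx => IccExtend_of_mem _ _ hx
  let G : ℝ → ℝ := fun x => ∫ t in (0:ℝ)..x, F t
  have hG : ∀ x, HasDerivAt G (F x) x := fun x => (hF.integral_hasStrictDerivAt 0 x).hasDerivAt
  let E : ℝ → ℝ := fun x => Real.exp (G x)
  have hE : ∀ x, HasDerivAt E (E x * F x) x := fun x => (hG x).exp
  have hEc : Continuous E := continuous_iff_continuousAt.2 fun x => (hE x).continuousAt
  let P : ℝ → ℝ := fun x => ∫ t in (0:ℝ)..x, E t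
  have hP : ∀ x, HasDerivAt P (E x) x := fun x => (hEc.integral_hasStrictDerivAt 0 x).hasDerivAt
  have Epos : ∀ x, 0 < E x := fun x => Real.exp_pos _
  have Z : 0 < P 1 := intervalIntegral.intervalIntegral_pos_of_pos (hEc.intervalIntegrable _ _)
    Epos zero_lt_one
  let Φ : ℝ → ℝ := fun x => P x / P 1
  have hΦ : ∀ x, HasDerivAt Φ (E x / P 1) x := fun x => (hP x).div_const _
  have hmono : StrictMono Φ := strictMono_of_deriv_pos fun x => by
    rw [(hΦ x).deriv]; exact div_pos (Epos x) Z
  have Φ0 : Φ 0 = 0 := by simp [Φ, P]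
  have Φ1 : Φ 1 = 1 := div_self Z.ne'
  have d1 : ∀ x ∈ II, derivI Φ x = E x / P 1 := fun x hx =>
    (hΦ x).hasDerivWithinAt.derivWithin (udI x hx)
  have d2 : ∀ x ∈ II, derivI (derivI Φ) x = E x * F x / P 1 := fun x hx =>
    ((((hE x).div_const (P 1)).hasDerivWithinAt).congr d1 (d1 x hx)).derivWithin (udI x hx)
  refine ⟨Φ, ⟨?_, Φ0, Φ1, hmono.strictMonoOn _, ?_, ?_⟩, ?_⟩
  · have : ContDiff ℝ (1 + 1) Φ := by
      rw [contDiff_succ_iff_deriv]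
      refine ⟨fun x => (hΦ x).differentiableAt, by simp, ?_⟩
      have e : deriv Φ = fun x => E x / P 1 := funext fun x => (hΦ x).deriv
      rw [e, contDiff_one_iff_deriv]
      refine ⟨fun x => ((hE x).div_const _).differentiableAt, ?_⟩
      have e : deriv (fun x => E x / P 1) = fun x => E x * F x / P 1 :=
        funext fun x => ((hE x).div_const _).deriv
      rw [e]; exact (hEc.mul hF).div_const _
    have h2 : ((2 : ℕ) : WithTop ℕ∞) = 1 + 1 := by norm_num
    rw [h2]
    exact this.contDiffOn
  · intro x hx
    exact ⟨Φ0 ▸ hmono.monotone hx.1, Φ1 ▸ hmono.monotone hx.2⟩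
  · intro x hx
    rw [d1 x hx]; exact div_pos (Epos x) Z
  · intro x hx
    unfold nonlin
    rw [d1 x hx, d2 x hx, hFf x hx]
    have := (Epos x).ne'
    have := Z.ne'
    field_simp

/-- a decomposition over a countable linearly ordered time set `T` with
summable `C¹`-nonlinearity norms can be composed: for any enumeration `θ` of `T`, the
ordered compositions `ψ_n` of the first `n` maps form a Cauchy sequence in the
nonlinearity sup-metric, and they converge to an element of `D²([0,1])` which does
not depend on the enumeration. -/
theorem countable_composition (T : Type*) [LinearOrder T] [Countable T]
    [DecidableEq T]
    (φ : T → ℝ → ℝ) (hD : ∀ τ, IsDk 3 (φ τ))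
    (hs : Summable fun τ => nlNorm1 (φ τ)) :
    ∃ Φ : ℝ → ℝ, IsDk 2 Φ ∧
      ∀ θ : ℕ → T, Function.Bijective θ →
        (∀ ε : ℝ, 0 < ε → ∃ N : ℕ, ∀ m ≥ N, ∀ n ≥ N,
          (⨆ x : Icc (0 : ℝ) 1,
            |nonlin (ordComp φ (Finset.image θ (Finset.range m))) x.1 -
              nonlin (ordComp φ (Finset.image θ (Finset.range n))) x.1|) ≤ ε) ∧
        Tendsto (fun n => ⨆ x : Icc (0 : ℝ) 1,
            |nonlin (ordComp φ (Finset.image θ (Finset.range n))) x.1 - nonlin Φ x.1|)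
          atTop (𝓝 0) := by
  classical
  have hex : ∀ x : ℝ, ∃ y : ℝ, x ∈ II →
      Tendsto (fun s : Finset T => nonlin (ordComp φ s) x) atTop (𝓝 y) := by
    intro x
    by_cases hx : x ∈ II
    · have hc : CauchySeq (fun s : Finset T => nonlin (ordComp φ s) x) := by
        rw [Metric.cauchySeq_iff]
        intro ε hε
        obtain ⟨s₀, h⟩ := cauchy_net hD hs (half_pos hε)
        refine ⟨s₀, fun s h1 t h2 => ?_⟩
        rw [Real.dist_eq]
        linarith [h s t h1 h2 x hx]
      obtain ⟨y, hy⟩ := cauchySeq_tendsto_of_complete hc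
      exact ⟨y, fun _ => hy⟩
    · exact ⟨0, fun h => absurd h hx⟩
  choose f hf using hex
  have hunif : ∀ ε : ℝ, 0 < ε → ∃ s₀ : Finset T, ∀ s : Finset T, s₀ ⊆ s → ∀ x ∈ II,
      |nonlin (ordComp φ s) x - f x| ≤ ε := by
    intro ε hε
    obtain ⟨s₀, h⟩ := cauchy_net hD hs hε
    refine ⟨s₀, fun s hss x hx => ?_⟩
    refine le_of_tendsto ((tendsto_const_nhds.sub (hf x hx)).abs) ?_
    filter_upwards [eventually_ge_atTop s₀] with t ht
    exact h s t hss ht x hx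
  have hcont : ContinuousOn f II := by
    have hU : TendstoUniformlyOn (fun s : Finset T => nonlin (ordComp φ s)) f atTop II := by
      rw [Metric.tendstoUniformlyOn_iff]
      intro ε hε
      obtain ⟨s₀, h⟩ := hunif _ (half_pos hε)
      filter_upwards [eventually_ge_atTop s₀] with s hss x hx
      rw [dist_comm, Real.dist_eq]
      linarith [h s hss x hx]
    exact hU.continuousOn (Frequently.of_forall fun s => (dk_N1 (ordComp_dk hD s)).continuousOn)
  obtain ⟨Φ, hΦ, hN⟩ := exists_of_nonlin hcont
  refine ⟨Φ, hΦ, fun θ hθ => ?_⟩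
  haveI : Nonempty (Icc (0 : ℝ) 1) := ⟨⟨0, le_rfl, zero_le_one⟩⟩
  have hev : ∀ s₀ : Finset T, ∃ N : ℕ, ∀ n ≥ N, s₀ ⊆ Finset.image θ (Finset.range n) := by
    intro s₀
    choose g hg using hθ.2
    refine ⟨s₀.sup g + 1, fun n hn t ht => ?_⟩
    rw [Finset.mem_image]
    refine ⟨g t, ?_, hg t⟩
    rw [Finset.mem_range]
    have := Finset.le_sup (f := g) ht
    omega
  constructor
  · intro ε hε
    obtain ⟨s₀, h⟩ := cauchy_net hD hs hε
    obtain ⟨N, hNN⟩ := hev s₀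
    exact ⟨N, fun m hm n hn => ciSup_le fun x => h _ _ (hNN m hm) (hNN n hn) x.1 x.2⟩
  · rw [Metric.tendsto_atTop]
    intro ε hε
    obtain ⟨s₀, h⟩ := hunif _ (half_pos hε)
    obtain ⟨N, hNN⟩ := hev s₀
    refine ⟨N, fun n hn => ?_⟩
    rw [Real.dist_eq, sub_zero, abs_of_nonneg (Real.iSup_nonneg fun _ => abs_nonneg _)]
    refine lt_of_le_of_lt (ciSup_le fun x => ?_) (half_lt_self hε)
    rw [hN x.1 x.2]
    exact h _ (hNN n hn) x.1 x.2

end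
end

section
/- For every φ ∈ D²([0,1]) and every nondegenerate closed interval I ⊆ [0,1], the zoom Z(φ;I) satisfies d(Z(φ;I), P) ≤ |I| · d(φ, P), where d denotes the distance induced by the C⁰-nonlinearity norm. -/
open Set Filter Topology

noncomputable section

/-- The zoom of `g` on the interval `[a,b]`: `Z(g;[a,b]) = ζ_{g([a,b])}⁻¹ ∘ g ∘ ζ_{[a,b]}`. -/
def zoom (g : ℝ → ℝ) (a b : ℝ) : ℝ → ℝ := fun t =>
  (g (a + (b - a) * t) - g a) / (g b - g a)

/-- Distance (in the `C⁰`-nonlinearity norm) from `φ` to the family `P` of pure maps;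
the pure maps `μ_r`, `r > -1` (restrictions of `x^α` away from the critical point,
rescaled to `[0,1]`, including the identity) have nonlinearity
`Nμ_r(x) = r(α-1)/(1+rx)`. -/
def distToPure (α : ℝ) (φ : ℝ → ℝ) : ℝ :=
  ⨅ r : {r : ℝ // -1 < r}, ⨆ x : Icc (0 : ℝ) 1,
    |nonlin φ x.1 - r.1 * (α - 1) / (1 + r.1 * x.1)|

theorem aux_affine_mem {a b t : ℝ} (ha : 0 ≤ a) (hab : a < b) (hb : b ≤ 1)
    (ht : t ∈ Icc (0 : ℝ) 1) : a + (b - a) * t ∈ Icc (0 : ℝ) 1 := by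
  obtain ⟨h0, h1⟩ := ht
  constructor
  · have := mul_nonneg (sub_nonneg.2 hab.le) h0
    linarith
  · have := mul_le_mul_of_nonneg_left h1 (sub_nonneg.2 hab.le)
    linarith

theorem aux_deriv_comp {g : ℝ → ℝ} (hg : DifferentiableOn ℝ g (Icc 0 1)) {a b t : ℝ}
    (ha : 0 ≤ a) (hab : a < b) (hb : b ≤ 1) (ht : t ∈ Icc (0 : ℝ) 1) :
    HasDerivWithinAt (fun t => g (a + (b - a) * t))
      ((b - a) * derivI g (a + (b - a) * t)) (Icc 0 1) t := by
  have h1 := (hg _ (aux_affine_mem ha hab hb ht)).hasDerivWithinAt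
  have h2 : HasDerivWithinAt (fun t : ℝ => a + (b - a) * t) (b - a) (Icc 0 1) t := by
    simpa using (((hasDerivAt_id t).const_mul (b - a)).const_add a).hasDerivWithinAt
  have h3 := HasDerivWithinAt.comp t h1 h2 (fun x hx => aux_affine_mem ha hab hb hx)
  rw [mul_comm]
  exact h3

theorem aux_nonlin_zoom {φ : ℝ → ℝ} (hφ : IsDk 2 φ) {a b t : ℝ}
    (ha : 0 ≤ a) (hab : a < b) (hb : b ≤ 1) (ht : t ∈ Icc (0 : ℝ) 1)
    (hd : DifferentiableOn ℝ (derivI φ) (Icc 0 1)) :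
    nonlin (zoom φ a b) t = (b - a) * nonlin φ (a + (b - a) * t) := by
  obtain ⟨hc, -, -, hm, -, hpos⟩ := hφ
  have hU : UniqueDiffOn ℝ (Icc (0 : ℝ) 1) := uniqueDiffOn_Icc zero_lt_one
  have hdφ : DifferentiableOn ℝ φ (Icc 0 1) := hc.differentiableOn (by norm_num)
  have hc0 : 0 < φ b - φ a :=
    sub_pos.2 (hm ⟨ha, by linarith⟩ ⟨by linarith, hb⟩ hab)
  have hz : ∀ s ∈ Icc (0 : ℝ) 1, derivI (zoom φ a b) s =
      (b - a) * derivI φ (a + (b - a) * s) / (φ b - φ a) := by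
    intro s hs
    exact (((aux_deriv_comp hdφ ha hab hb hs).sub_const (φ a)).div_const
      (φ b - φ a)).derivWithin (hU s hs)
  have hz2 : derivI (derivI (zoom φ a b)) t =
      (b - a) * ((b - a) * derivI (derivI φ) (a + (b - a) * t)) / (φ b - φ a) := by
    have h := (((aux_deriv_comp hd ha hab hb ht).const_mul (b - a)).div_const (φ b - φ a))
    exact (h.congr hz (hz t ht)).derivWithin (hU t ht)
  have hp := hpos _ (aux_affine_mem ha hab hb ht)
  have hL : 0 < b - a := sub_pos.2 hab
  unfold nonlin
  rw [hz2, hz t ht]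
  have h1 := hp.ne'
  have h2 := hL.ne'
  have h3 := hc0.ne'
  generalize derivI φ (a + (b - a) * t) = p at *
  generalize derivI (derivI φ) (a + (b - a) * t) = q at *
  generalize b - a = L at *
  generalize φ b - φ a = c at *
  field_simp

theorem aux_den_pos {r x : ℝ} (hr : -1 < r) (hx : x ∈ Icc (0 : ℝ) 1) : 0 < 1 + r * x := by
  obtain ⟨h0, h1⟩ := hx
  rcases le_or_gt 0 r with h | h
  · have := mul_nonneg h h0
    linarith
  · nlinarith

/-- zoom operators contract the distance to the pure maps:
`d(Z(φ;I), P) ≤ |I| · d(φ, P)`. -/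
theorem zoom_contracts_to_pure (α : ℝ) (hα : 1 < α) (φ : ℝ → ℝ) (hφ : IsDk 2 φ)
    (a b : ℝ) (ha : 0 ≤ a) (hab : a < b) (hb : b ≤ 1) :
    distToPure α (zoom φ a b) ≤ (b - a) * distToPure α φ := by
  have hU : UniqueDiffOn ℝ (Icc (0 : ℝ) 1) := uniqueDiffOn_Icc zero_lt_one
  have hc1 : ContDiffOn ℝ 1 (derivI φ) (Icc 0 1) :=
    hφ.1.derivWithin hU (by norm_num)
  have hd : DifferentiableOn ℝ (derivI φ) (Icc 0 1) := hc1.differentiableOn (by norm_num)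
  have hc2 : ContinuousOn (derivI (derivI φ)) (Icc 0 1) :=
    hc1.continuousOn_derivWithin hU (by norm_num)
  have hL : 0 < b - a := sub_pos.2 hab
  have hN : ContinuousOn (nonlin φ) (Icc 0 1) :=
    hc2.div hc1.continuousOn (fun x hx => (hφ.2.2.2.2.2 x hx).ne')
  unfold distToPure
  rw [Real.mul_iInf_of_nonneg hL.le]
  haveI : Nonempty {r : ℝ // -1 < r} := ⟨⟨0, by norm_num⟩⟩
  haveI : Nonempty (Icc (0 : ℝ) 1) := ⟨⟨0, by norm_num⟩⟩
  refine le_ciInf fun ⟨r, hr⟩ => ?_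
  have ha1 : 0 < 1 + r * a := aux_den_pos hr ⟨ha, by linarith⟩
  have hb1 : 0 < 1 + r * b := aux_den_pos hr ⟨by linarith, hb⟩
  have hs : -1 < r * (b - a) / (1 + r * a) := by
    rw [lt_div_iff₀ ha1]
    linarith
  refine ciInf_le_of_le ⟨0, ?_⟩ ⟨r * (b - a) / (1 + r * a), hs⟩ ?_
  · rintro _ ⟨q, rfl⟩
    exact Real.iSup_nonneg fun x => abs_nonneg _
  refine ciSup_le fun ⟨t, ht⟩ => ?_
  have hmem := aux_affine_mem ha hab hb ht
  have hbdd : BddAbove (range fun x : Icc (0 : ℝ) 1 =>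
      |nonlin φ x.1 - r * (α - 1) / (1 + r * x.1)|) := by
    have hcont : ContinuousOn (fun x : ℝ => |nonlin φ x - r * (α - 1) / (1 + r * x)|)
        (Icc 0 1) := by
      refine (hN.sub (ContinuousOn.div (by fun_prop) (by fun_prop) ?_)).abs
      intro x hx
      exact (aux_den_pos hr hx).ne'
    obtain ⟨C, hC⟩ := isCompact_Icc.bddAbove_image hcont
    refine ⟨C, ?_⟩
    rintro _ ⟨x, rfl⟩
    exact hC ⟨x.1, x.2, rfl⟩
  have hle := le_ciSup hbdd ⟨a + (b - a) * t, hmem⟩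
  have hden := aux_den_pos hr hmem
  have key : r * (b - a) / (1 + r * a) * (α - 1) / (1 + r * (b - a) / (1 + r * a) * t) =
      (b - a) * (r * (α - 1) / (1 + r * (a + (b - a) * t))) := by
    have e : 1 + r * (b - a) / (1 + r * a) * t =
        (1 + r * (a + (b - a) * t)) / (1 + r * a) := by
      field_simp
      ring
    rw [e]
    have h1 := hden.ne'
    have h2 := ha1.ne'
    generalize 1 + r * (a + (b - a) * t) = D at *
    generalize 1 + r * a = A at *
    field_simp
  show |nonlin (zoom φ a b) t - r * (b - a) / (1 + r * a) * (α - 1) /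
    (1 + r * (b - a) / (1 + r * a) * t)| ≤ _
  rw [key, aux_nonlin_zoom hφ ha hab hb ht hd, ← mul_sub, abs_mul, abs_of_pos hL]
  exact mul_le_mul_of_nonneg_left hle hL.le

end
end
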